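/- arXiv:2511.12327 — 8 statements merged into one kernel-verified Lean document; each statement's English description precedes it below -/
import Mathlib

section
/- Let A, B ⊆ ℝ and let f : A → B be strictly decreasing. Then there exists a countable set A₀ ⊆ A such that the restriction of f to A \ A₀ is a homeomorphism of A \ A₀ onto f(A \ A₀), where both sets carry the Euclidean subspace topology. -/
/-!
An antitone map between second-countable linear orders has only countably many points of
discontinuity, and the inverse of a strictly antitone map is again antitone. Removing from the
domain the discontinuities of `f` together with the preimages of those of `f⁻¹` therefore leaves
a bijection that is continuous in both directions.
-/

open Set Topology

theorem isEmbedding_imageFactorization_of_leftInvOn {X Y : Type*} [TopologicalSpace X]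
    [TopologicalSpace Y] {f : X → Y} {g : Y → X} {s : Set X} (hgf : LeftInvOn g f s)
    (hf : ContinuousOn f s) (hg : ContinuousOn g (f '' s)) :
    IsEmbedding (s.imageFactorization f) :=
  have hgs : MapsTo g (f '' s) s := hgf.mapsTo (surjOn_image f s)
  .of_leftInverse (f := hgs.restrict) (fun x ↦ Subtype.ext (hgf x.2))
    (hg.mapsToRestrict hgs) (hf.mapsToRestrict (mapsTo_image f s))

section LinearOrder

variable {α β : Type*} [LinearOrder α] [TopologicalSpace α] [OrderTopology α]
  [LinearOrder β] [TopologicalSpace β] [OrderTopology β] [SecondCountableTopology β]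
  {f : α → β} {s : Set α}

theorem exists_countable_continuousOn_sdiff_of_antitoneOn (hf : AntitoneOn f s) :
    ∃ t ⊆ s, t.Countable ∧ ContinuousOn f (s \ t) := by
  refine ⟨{x ∈ s | ¬ContinuousWithinAt f s x}, sep_subset _ _,
    hf.countable_not_continuousWithinAt, fun x ⟨hxs, hx⟩ ↦ ?_⟩
  have hfx : ContinuousWithinAt f s x := by_contra fun h ↦ hx ⟨hxs, h⟩
  exact hfx.mono sdiff_subset

variable [SecondCountableTopology α]

theorem exists_countable_isEmbedding_imageFactorization_sdiff_of_leftInvOn {g : β → α}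
    (hf : AntitoneOn f s) (hgf : LeftInvOn g f s) :
    ∃ t ⊆ s, t.Countable ∧ IsEmbedding ((s \ t).imageFactorization f) := by
  have hgs : MapsTo g (f '' s) s := hgf.mapsTo (surjOn_image f s)
  have hg : AntitoneOn g (f '' s) :=
    Function.antitoneOn_of_rightInvOn_of_mapsTo hf hgf.rightInvOn_image hgs
  obtain ⟨t, hts, htc, hft⟩ := exists_countable_continuousOn_sdiff_of_antitoneOn hf
  obtain ⟨u, hus, huc, hgu⟩ := exists_countable_continuousOn_sdiff_of_antitoneOn hg
  have himage : f '' (s \ (t ∪ g '' u)) ⊆ f '' s \ u := by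
    rintro _ ⟨x, ⟨hxs, hx⟩, rfl⟩
    exact ⟨mem_image_of_mem f hxs, fun hxu ↦ hx (.inr ⟨f x, hxu, hgf hxs⟩)⟩
  exact ⟨t ∪ g '' u, union_subset hts (hgs.mono_left hus).image_subset, htc.union (huc.image g),
    isEmbedding_imageFactorization_of_leftInvOn (hgf.mono sdiff_subset)
      (hft.mono (sdiff_subset_sdiff_right subset_union_left)) (hgu.mono himage)⟩

theorem exists_countable_isEmbedding_imageFactorization_sdiff_of_strictAntiOn
    (hf : StrictAntiOn f s) :
    ∃ t ⊆ s, t.Countable ∧ IsEmbedding ((s \ t).imageFactorization f) := by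
  cases isEmpty_or_nonempty α
  · exact ⟨∅, empty_subset s, countable_empty, .of_subsingleton _⟩
  · exact exists_countable_isEmbedding_imageFactorization_sdiff_of_leftInvOn hf.antitoneOn
      hf.injOn.leftInvOn_invFunOn

end LinearOrder

theorem stmt0_general {α β : Type*} [LinearOrder α] [TopologicalSpace α] [OrderTopology α]
    [SecondCountableTopology α] [LinearOrder β] [TopologicalSpace β] [OrderTopology β]
    [SecondCountableTopology β] (A : Set α) (f : α → β) (hf : StrictAntiOn f A) :
    ∃ A₀ : Set α, A₀.Countable ∧ A₀ ⊆ A ∧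
      ∃ h : (A \ A₀ : Set α) ≃ₜ (f '' (A \ A₀) : Set β),
        ∀ x : (A \ A₀ : Set α), (h x : β) = f x := by
  obtain ⟨A₀, hsub, hcount, hemb⟩ :=
    exists_countable_isEmbedding_imageFactorization_sdiff_of_strictAntiOn hf
  exact ⟨A₀, hcount, hsub, hemb.toHomeomorphOfSurjective imageFactorization_surjective,
    fun _ ↦ rfl⟩

/-- For any strictly decreasing `f : A → B` (sets of reals),
there is a countable `A₀ ⊆ A` such that `f` restricted to `A \ A₀` is a
homeomorphism onto its image `f '' (A \ A₀)` (Euclidean subspace topologies). -/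
theorem stmt0 (A B : Set ℝ) (f : ℝ → ℝ) (hf : StrictAntiOn f A)
    (hmap : Set.MapsTo f A B) :
    ∃ A₀ : Set ℝ, A₀.Countable ∧ A₀ ⊆ A ∧
      ∃ h : (A \ A₀ : Set ℝ) ≃ₜ (f '' (A \ A₀) : Set ℝ),
        ∀ x : (A \ A₀ : Set ℝ), (h x : ℝ) = f x :=
  stmt0_general A f hf
end

section
/- Let X ⊆ ℝ and suppose f : X → X is a strictly decreasing bijection that is a homeomorphism of X with respect to the Euclidean subspace topology. Let A ⊆ X and B = X \ A, and let G_{f|A} = {(a, f(a)) : a ∈ A} and G_{f|B} = {(b, f(b)) : b ∈ B}. If there exist sets U, V ⊆ X × X that are open in (X[≤])² with G_{f|A} ⊆ U, G_{f|B} ⊆ V and U ∩ V = ∅, then A is a relative Fσ-set in X with respect to the Euclidean subspace topology. -/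
/-- The Sorgenfrey (lower limit) topology on `ℝ`, generated by half-open
intervals `[a, b)` with `a < b`. -/
def sorgenfrey : TopologicalSpace ℝ :=
  TopologicalSpace.generateFrom {s : Set ℝ | ∃ a b : ℝ, a < b ∧ s = Set.Ico a b}

/-- The Sorgenfrey subspace topology on a set of reals `X`, i.e. `X[≤]`. -/
def sorgenfreySub (X : Set ℝ) : TopologicalSpace X :=
  sorgenfrey.induced Subtype.val

/-- The product topology `(X[≤])²` on `X × X`. -/
def sorgenfreySq (X : Set ℝ) : TopologicalSpace (X × X) :=
  @instTopologicalSpaceProd X X (sorgenfreySub X) (sorgenfreySub X)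

/-! The key point is an argument about suprema. Suppose `U` and `V` are disjoint, `V` is a
neighborhood of `b` from above, and points `a`, each with all points above it at distance less than
`ε` belonging to `U`, converge to `b`. Then `a ⊔ b` tends to `b ⊔ b = b`, so it lies above both `a`
and `b` and is close to both: it belongs to `U` and to `V`, a contradiction. Hence the closures, for
`ε = 1 / (n + 1)`, of the sets of such points `a` separate the points surrounded from above by `U`
from those surrounded by `V`. Neighborhoods in `(X[≤])²` are neighborhoods from above in the product
order on `X × X`, so these closed sets can be pulled back along `x ↦ (x, f x)`. -/

open Filter Metric Set Topology

instance instContinuousSupProd {α β : Type*} [TopologicalSpace α] [TopologicalSpace β] [Max α]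
    [Max β] [ContinuousSup α] [ContinuousSup β] : ContinuousSup (α × β) where
  continuous_sup := (continuous_fst.fst.sup continuous_snd.fst).prodMk
    (continuous_fst.snd.sup continuous_snd.snd)

section Separation

variable {α : Type*} [PseudoMetricSpace α]

/-- The points `a` around which the upper half-ball of radius `ε` is contained in `U`: an analogue
of the interior of `U` for neighborhoods from above, of uniform size `ε`. -/
def upperInterior [Preorder α] (ε : ℝ) (U : Set α) : Set α :=
  {a | ball a ε ∩ Ici a ⊆ U}

theorem exists_mem_upperInterior_of_mem_nhdsGE [Preorder α] {U : Set α} {a : α}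
    (hU : U ∈ 𝓝[≥] a) : ∃ n : ℕ, a ∈ upperInterior (1 / (n + 1)) U := by
  obtain ⟨ε, hε, hεU⟩ := mem_nhdsWithin_iff.1 hU
  obtain ⟨n, hn⟩ := exists_nat_one_div_lt hε
  exact ⟨n, (inter_subset_inter_left _ (ball_subset_ball hn.le)).trans hεU⟩

variable [SemilatticeSup α] [ContinuousSup α]

theorem inter_nonempty_of_mem_closure_upperInterior {U V : Set α} {b : α} {ε : ℝ} (hε : 0 < ε)
    (hb : b ∈ closure (upperInterior ε U)) (hV : V ∈ 𝓝[≥] b) : (U ∩ V).Nonempty := by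
  have tendsto_sup : Tendsto (fun a ↦ a ⊔ b) (𝓝 b) (𝓝 b) :=
    (continuous_id.sup continuous_const).tendsto' b b (sup_idem b)
  have sup_mem_V : ∀ᶠ a in 𝓝 b, a ⊔ b ∈ V :=
    (tendsto_nhdsWithin_iff.2 ⟨tendsto_sup, .of_forall fun _ ↦ le_sup_right⟩).eventually hV
  have dist_sup_lt : ∀ᶠ a in 𝓝 b, dist (a ⊔ b) a < ε :=
    (tendsto_sup.dist tendsto_id).eventually_lt_const (by simpa only [id, dist_self] using hε)
  obtain ⟨a, haU, haV, hdist⟩ :=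
    ((mem_closure_iff_frequently.1 hb).and_eventually (sup_mem_V.and dist_sup_lt)).exists
  exact ⟨a ⊔ b, haU ⟨hdist, le_sup_left⟩, haV⟩

theorem exists_isClosed_subset_iUnion_disjoint_of_mem_nhdsGE {A B U V : Set α}
    (hAU : ∀ a ∈ A, U ∈ 𝓝[≥] a) (hBV : ∀ b ∈ B, V ∈ 𝓝[≥] b) (hUV : Disjoint U V) :
    ∃ F : ℕ → Set α, (∀ n, IsClosed (F n)) ∧ A ⊆ ⋃ n, F n ∧ Disjoint (⋃ n, F n) B := by
  refine ⟨fun n ↦ closure (upperInterior (1 / (n + 1)) U), fun _ ↦ isClosed_closure,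
    fun a ha ↦ ?_, disjoint_left.2 fun b hbF hbB ↦ ?_⟩
  · obtain ⟨n, hn⟩ := exists_mem_upperInterior_of_mem_nhdsGE (hAU a ha)
    exact mem_iUnion_of_mem n (subset_closure hn)
  · obtain ⟨n, hn⟩ := mem_iUnion.1 hbF
    exact (inter_nonempty_of_mem_closure_upperInterior Nat.one_div_pos_of_nat hn (hBV b hbB)
      ).not_disjoint hUV

end Separation

section Sorgenfrey

variable {X : Set ℝ}

theorem nhds_sorgenfrey (x : ℝ) : @nhds ℝ sorgenfrey x = 𝓝[≥] x := by
  refine le_antisymm ((nhdsGE_basis_Ico x).ge_iff.2 fun b hxb ↦ ?_) ?_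
  · exact @IsOpen.mem_nhds ℝ sorgenfrey x _ (.basic _ ⟨x, b, hxb, rfl⟩) ⟨le_rfl, hxb⟩
  · rw [sorgenfrey, TopologicalSpace.nhds_generateFrom]
    refine le_iInf₂ fun s hs ↦ le_principal_iff.2 ?_
    obtain ⟨hxs, a, b, -, rfl⟩ := hs
    exact Ico_mem_nhdsGE_of_mem hxs

theorem nhds_sorgenfreySub (x : X) : @nhds X (sorgenfreySub X) x = 𝓝[≥] x := by
  rw [sorgenfreySub, @nhds_induced _ _ sorgenfrey, nhds_sorgenfrey, nhdsWithin, comap_inf,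
    comap_principal, ← nhds_subtype]
  rfl

theorem nhds_sorgenfreySq (p : X × X) : @nhds (X × X) (sorgenfreySq X) p = 𝓝[≥] p := by
  rw [sorgenfreySq, @nhds_prod_eq _ _ (sorgenfreySub X) (sorgenfreySub X), nhds_sorgenfreySub,
    nhds_sorgenfreySub, ← nhdsWithin_prod_eq, Ici_prod_Ici]

theorem mem_nhdsGE_of_isOpen_sorgenfreySq {U : Set (X × X)} {p : X × X}
    (hU : IsOpen[sorgenfreySq X] U) (hp : p ∈ U) : U ∈ 𝓝[≥] p :=
  nhds_sorgenfreySq p ▸ @IsOpen.mem_nhds _ (sorgenfreySq X) p U hU hp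

theorem stmt1_general {f : X → X} (hf : Continuous f) {A : Set X} {U V : Set (X × X)}
    (hU : IsOpen[sorgenfreySq X] U) (hV : IsOpen[sorgenfreySq X] V)
    (hAU : ∀ x ∈ A, (x, f x) ∈ U) (hAcV : ∀ x ∉ A, (x, f x) ∈ V) (hUV : Disjoint U V) :
    ∃ F : ℕ → Set X, (∀ n, IsClosed (F n)) ∧ A = ⋃ n, F n := by
  let graphMap : X → X × X := fun x ↦ (x, f x)
  have continuous_graphMap : Continuous graphMap := continuous_id.prodMk hf
  obtain ⟨F, hF, hAF, hFA⟩ := exists_isClosed_subset_iUnion_disjoint_of_mem_nhdsGE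
    (A := graphMap '' A) (B := graphMap '' Aᶜ)
    (forall_mem_image.2 fun x hx ↦ mem_nhdsGE_of_isOpen_sorgenfreySq hU (hAU x hx))
    (forall_mem_image.2 fun x hx ↦ mem_nhdsGE_of_isOpen_sorgenfreySq hV (hAcV x hx)) hUV
  refine ⟨fun n ↦ graphMap ⁻¹' F n, fun n ↦ (hF n).preimage continuous_graphMap, ?_⟩
  rw [← preimage_iUnion]
  refine (image_subset_iff.1 hAF).antisymm fun x hx ↦ ?_
  by_contra hxA
  exact disjoint_left.1 hFA hx (mem_image_of_mem graphMap hxA)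

end Sorgenfrey

/-- If `f : X → X` is a strictly decreasing bijection which is a
homeomorphism for the Euclidean subspace topology, `A ⊆ X`, `B = X \ A`, and the
graphs of `f|A` and `f|B` can be separated by disjoint `(X[≤])²`-open sets, then
`A` is relatively `Fσ` in `X` (Euclidean subspace topology). -/
theorem stmt1 (X : Set ℝ) (f : X ≃ₜ X)
    (hf : ∀ x y : X, (x : ℝ) < (y : ℝ) → (f y : ℝ) < (f x : ℝ))
    (A : Set ℝ) (hA : A ⊆ X)
    (U V : Set (X × X))
    (hU : @IsOpen _ (sorgenfreySq X) U) (hV : @IsOpen _ (sorgenfreySq X) V)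
    (hGAU : {p : X × X | (p.1 : ℝ) ∈ A ∧ p.2 = f p.1} ⊆ U)
    (hGBV : {p : X × X | (p.1 : ℝ) ∉ A ∧ p.2 = f p.1} ⊆ V)
    (hUV : U ∩ V = ∅) :
    ∃ F : ℕ → Set X, (∀ n, IsClosed (F n)) ∧
      (Subtype.val ⁻¹' A : Set X) = ⋃ n, F n :=
  stmt1_general f.continuous hU hV (fun _ hx ↦ hGAU ⟨hx, rfl⟩) (fun _ hx ↦ hGBV ⟨hx, rfl⟩)
    (disjoint_iff_inter_eq_empty.2 hUV)
end

section
/- Let A ⊆ ℝ be uncountable and let f : A → ℝ be strictly decreasing. Then there exist a countable set C and a strictly decreasing function g defined on cl(A) \ C (where cl(A) is the Euclidean closure of A) such that g agrees with f on A \ C. -/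
/-! Extend `f` by `g x = inf {f a | a ∈ A, a ≤ x}`. Since `f` is decreasing, `f a ≤ g x` for every
`a ∈ A` above `x`, and `g y ≤ f b` for every `b ∈ A` below `y`. Hence `g y < g x` as soon as two
points `a < b` of `A` lie between `x` and `y`, which is the case when `x` is a limit of points of
`A` from the right. So `g` is strictly decreasing on the set of two-sided limit points of `A`:
there, limits from the left and from the right also ensure that the infimum is over a nonempty set
that is bounded below. In a second countable order, only countably many points of `closure A` are
isolated in it from one side. -/

open Set Topology

theorem mem_lowerBounds_image_inter_Iic {α β : Type*} [Preorder α] [Preorder β] {f : α → β}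
    {A : Set α} {x a : α} (hf : AntitoneOn f A) (ha : a ∈ A) (hxa : x ≤ a) :
    f a ∈ lowerBounds (f '' (A ∩ Iic x)) := by
  rintro _ ⟨b, ⟨hb, hbx⟩, rfl⟩
  exact hf hb ha (hbx.trans hxa)

section InfExtension

variable {α β : Type*} [Preorder α] [ConditionallyCompleteLattice β] {f : α → β} {A : Set α}
  {x a : α}

/-- The candidate extension of an antitone function from `A`. The infimum is taken over `Iic x`
rather than `Iio x`, so that the value at a point of `A` is that of `f`. It is a junk value where
the set of values is empty or not bounded below. -/
noncomputable def infExtension (f : α → β) (A : Set α) (x : α) : β :=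
  sInf (f '' (A ∩ Iic x))

theorem infExtension_eqOn (hf : AntitoneOn f A) : EqOn (infExtension f A) f A := by
  intro x hx
  have hgreatest : IsGreatest (A ∩ Iic x) x := ⟨⟨hx, le_rfl⟩, fun _ ha => ha.2⟩
  exact ((hf.mono inter_subset_left).map_isGreatest hgreatest).csInf_eq

theorem le_infExtension (hf : AntitoneOn f A) (hx : (A ∩ Iic x).Nonempty) (ha : a ∈ A)
    (hxa : x ≤ a) : f a ≤ infExtension f A x :=
  le_csInf (hx.image f) (mem_lowerBounds_image_inter_Iic hf ha hxa)

theorem infExtension_le (hf : AntitoneOn f A) (hx : (A ∩ Ici x).Nonempty) (ha : a ∈ A)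
    (hax : a ≤ x) : infExtension f A x ≤ f a := by
  obtain ⟨c, hc, hxc⟩ := hx
  exact csInf_le ⟨f c, mem_lowerBounds_image_inter_Iic hf hc hxc⟩ ⟨a, ⟨ha, hax⟩, rfl⟩

end InfExtension

theorem strictAntiOn_infExtension {α β : Type*} [LinearOrder α] [ConditionallyCompleteLattice β]
    {f : α → β} {A S : Set α} (hf : StrictAntiOn f A)
    (hbelow : ∀ x ∈ S, (A ∩ Iic x).Nonempty) (habove : ∀ x ∈ S, (A ∩ Ici x).Nonempty)
    (hbetween : ∀ x ∈ S, ∀ y ∈ S, x < y → (A ∩ Icc x y).Nontrivial) :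
    StrictAntiOn (infExtension f A) S := by
  intro x hx y hy hxy
  obtain ⟨a, ⟨ha, hxa, -⟩, b, ⟨hb, -, hby⟩, hab⟩ := (hbetween x hx y hy hxy).exists_lt
  calc infExtension f A y
      ≤ f b := infExtension_le hf.antitoneOn (habove y hy) hb hby
    _ < f a := hf ha hb hab
    _ ≤ infExtension f A x := le_infExtension hf.antitoneOn (hbelow x hx) ha hxa

section TwoSidedLimitPoints

variable {α : Type*} [TopologicalSpace α]

theorem nhdsWithin_closure_inter_eq_bot {A U : Set α} {x : α} (hU : IsOpen U)
    (hx : x ∉ closure (A ∩ U)) : 𝓝[closure A ∩ U] x = ⊥ :=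
  notMem_closure_iff_nhdsWithin_eq_bot.1
    fun h => hx (closure_minimal hU.closure_inter isClosed_closure h)

variable [LinearOrder α] {A : Set α} {x y : α}

/-- The points that are limits of points of `A` from the left and from the right; they need not lie
in `A`. A strictly antitone function on `A` extends to a strictly antitone function there. -/
def twoSidedLimitPoints (A : Set α) : Set α :=
  {x | x ∈ closure (A ∩ Iio x) ∧ x ∈ closure (A ∩ Ioi x)}

theorem twoSidedLimitPoints_subset_closure : twoSidedLimitPoints A ⊆ closure A :=
  fun _ hx => closure_mono inter_subset_left hx.1

theorem inter_Ioo_nonempty_of_mem_closure_inter_Ioi [ClosedIciTopology α]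
    (hx : x ∈ closure (A ∩ Ioi x)) (hxy : x < y) : (A ∩ Ioo x y).Nonempty := by
  obtain ⟨a, hay, ha, hxa⟩ := mem_closure_iff.1 hx (Iio y) isOpen_Iio hxy
  exact ⟨a, ha, hxa, hay⟩

theorem inter_Icc_nontrivial_of_mem_closure_inter_Ioi [ClosedIciTopology α]
    (hx : x ∈ closure (A ∩ Ioi x)) (hxy : x < y) : (A ∩ Icc x y).Nontrivial := by
  obtain ⟨b, hb, hxb, hby⟩ := inter_Ioo_nonempty_of_mem_closure_inter_Ioi hx hxy
  obtain ⟨a, ha, hxa, hab⟩ := inter_Ioo_nonempty_of_mem_closure_inter_Ioi hx hxb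
  exact ⟨a, ⟨ha, hxa.le, (hab.trans hby).le⟩, b, ⟨hb, hxb.le, hby.le⟩, hab.ne⟩

theorem countable_closure_sdiff_twoSidedLimitPoints [OrderTopology α]
    [SecondCountableTopology α] (A : Set α) :
    (closure A \ twoSidedLimitPoints A).Countable := by
  refine ((countable_setOfPred_isolated_left_within (s := closure A)).union
    (countable_setOfPred_isolated_right_within (s := closure A))).mono ?_
  rintro x ⟨hxA, hx⟩
  rcases not_and_or.1 hx with hleft | hright
  · exact Or.inl ⟨hxA, nhdsWithin_closure_inter_eq_bot isOpen_Iio hleft⟩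
  · exact Or.inr ⟨hxA, nhdsWithin_closure_inter_eq_bot isOpen_Ioi hright⟩

theorem strictAntiOn_infExtension_twoSidedLimitPoints [ClosedIciTopology α] {β : Type*}
    [ConditionallyCompleteLattice β] {f : α → β} (hf : StrictAntiOn f A) :
    StrictAntiOn (infExtension f A) (twoSidedLimitPoints A) := by
  refine strictAntiOn_infExtension hf (fun x hx => ?_) (fun x hx => ?_)
    fun x hx _ _ => inter_Icc_nontrivial_of_mem_closure_inter_Ioi hx.2
  · exact (closure_nonempty_iff.1 ⟨x, hx.1⟩).mono (inter_subset_inter_right A Iio_subset_Iic_self)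
  · exact (closure_nonempty_iff.1 ⟨x, hx.2⟩).mono (inter_subset_inter_right A Ioi_subset_Ici_self)

end TwoSidedLimitPoints

theorem stmt5_general {α β : Type*} [LinearOrder α] [TopologicalSpace α] [OrderTopology α]
    [SecondCountableTopology α] [ConditionallyCompleteLattice β] {A : Set α} {f : α → β}
    (hf : StrictAntiOn f A) :
    ∃ C : Set α, C.Countable ∧ ∃ g : α → β, StrictAntiOn g (closure A \ C) ∧ EqOn g f A := by
  refine ⟨closure A \ twoSidedLimitPoints A, countable_closure_sdiff_twoSidedLimitPoints A,
    infExtension f A, ?_, infExtension_eqOn hf.antitoneOn⟩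
  rw [sdiff_sdiff_cancel_left twoSidedLimitPoints_subset_closure]
  exact strictAntiOn_infExtension_twoSidedLimitPoints hf

/-- A strictly decreasing function on an uncountable set of reals
`A` extends, after removing a countable set `C`, to a strictly decreasing
function on `cl(A) \ C`. -/
theorem stmt5 (A : Set ℝ) (hA : ¬A.Countable) (f : ℝ → ℝ)
    (hf : StrictAntiOn f A) :
    ∃ C : Set ℝ, C.Countable ∧ ∃ g : ℝ → ℝ,
      StrictAntiOn g (closure A \ C) ∧ ∀ x ∈ A \ C, g x = f x := by
  obtain ⟨C, hC, g, hg, hgf⟩ := stmt5_general hf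
  exact ⟨C, hC, g, hg, fun x hx => hgf hx.1⟩
end

section
/- Let A ⊆ ℝ, let f : A → ℝ be strictly decreasing, and let g : cl(A) → ℝ be a non-increasing function with g(x) = f(x) for all x ∈ A, where cl(A) is the Euclidean closure of A. Then for every b ∈ ℝ, the fiber g⁻¹({b}) contains at most 3 points. -/
/-
Between two points `a < c` of a fiber, `g` is squeezed to be constant, so strict monotonicity leaves
at most one point of `A` there. Since `Ioo a c` is open, every point of `closure A` in it is a limit
of points of `A ∩ Ioo a c`, so it contains at most one point of `closure A` as well. Taking `a` and
`c` to be the extreme points of four points of a fiber would put two of them in `Ioo a c`.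
-/

open Set

section Order

variable {α β : Type*} [LinearOrder α]

theorem encard_le_add_two_of_finite_of_encard_inter_Ioo_le {s : Set α} (hs : s.Finite) {n : ℕ∞}
    (h : ∀ a ∈ s, ∀ c ∈ s, (s ∩ Ioo a c).encard ≤ n) : s.encard ≤ n + 2 := by
  obtain rfl | hne := s.eq_empty_or_nonempty
  · simp
  obtain ⟨a, ha, ha_le⟩ := s.exists_min_image id hs hne
  obtain ⟨c, hc, hc_ge⟩ := s.exists_max_image id hs hne
  have subset_insert_endpoints : s ⊆ insert a (insert c (s ∩ Ioo a c)) := by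
    intro x hx
    obtain rfl | hax := (ha_le x hx).eq_or_lt
    · exact mem_insert _ _
    obtain rfl | hxc := (hc_ge x hx).eq_or_lt
    · exact mem_insert_of_mem _ (mem_insert _ _)
    exact mem_insert_of_mem _ (mem_insert_of_mem _ ⟨hx, hax, hxc⟩)
  calc
    s.encard ≤ (insert a (insert c (s ∩ Ioo a c))).encard :=
      encard_le_encard subset_insert_endpoints
    _ ≤ (insert c (s ∩ Ioo a c)).encard + 1 := encard_insert_le _ _
    _ ≤ (s ∩ Ioo a c).encard + 1 + 1 := by gcongr; exact encard_insert_le _ _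
    _ ≤ n + 1 + 1 := by gcongr; exact h a ha c hc
    _ = n + 2 := by rw [add_assoc, one_add_one_eq_two]

theorem encard_le_add_two_of_encard_inter_Ioo_le {s : Set α} {n : ℕ∞}
    (h : ∀ a ∈ s, ∀ c ∈ s, (s ∩ Ioo a c).encard ≤ n) : s.encard ≤ n + 2 := by
  refine ENat.forall_natCast_le_iff_le.1 fun k hk => ?_
  obtain ⟨t, hts, htk⟩ := exists_subset_encard_eq hk
  rw [← htk]
  exact encard_le_add_two_of_finite_of_encard_inter_Ioo_le (finite_of_encard_eq_coe htk)
    fun a ha c hc => (encard_le_encard (inter_subset_inter_left _ hts)).trans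
      (h a (hts ha) c (hts hc))

theorem subsingleton_inter_Icc_of_strictAntiOn [Preorder β] {f : α → β} {A s : Set α}
    (hA : StrictAntiOn f A) (hs : AntitoneOn f s) (hAs : A ⊆ s) {a c : α} (ha : a ∈ s)
    (hc : c ∈ s) (hac : f a ≤ f c) : (A ∩ Icc a c).Subsingleton := by
  have not_lt_of_mem {x y : α} (hx : x ∈ A ∩ Icc a c) (hy : y ∈ A ∩ Icc a c) : ¬x < y :=
    fun hxy => lt_irrefl (f y) <| calc
      f y < f x := hA hx.1 hy.1 hxy
      _ ≤ f a := hs ha (hAs hx.1) hx.2.1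
      _ ≤ f c := hac
      _ ≤ f y := hs (hAs hy.1) hc hy.2.2
  exact fun x hx y hy =>
    le_antisymm (not_lt.1 (not_lt_of_mem hy hx)) (not_lt.1 (not_lt_of_mem hx hy))

end Order

theorem subsingleton_closure_inter_of_isOpen {X : Type*} [TopologicalSpace X] [T1Space X]
    {A U : Set X} (hU : IsOpen U) (h : (A ∩ U).Subsingleton) : (closure A ∩ U).Subsingleton := by
  rw [inter_comm] at h ⊢
  exact h.closure.anti hU.inter_closure

theorem stmt6_general {α β : Type*} [LinearOrder α] [TopologicalSpace α] [OrderClosedTopology α]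
    [Preorder β] {A : Set α} {g : α → β} (hA : StrictAntiOn g A) (hg : AntitoneOn g (closure A))
    (b : β) : (closure A ∩ g ⁻¹' {b}).encard ≤ 3 := by
  have encard_inter_Ioo_le : ∀ a ∈ closure A ∩ g ⁻¹' {b}, ∀ c ∈ closure A ∩ g ⁻¹' {b},
      (closure A ∩ g ⁻¹' {b} ∩ Ioo a c).encard ≤ 1 := by
    rintro a ⟨ha, hab : g a = b⟩ c ⟨hc, hcb : g c = b⟩
    have hA_Icc : (A ∩ Icc a c).Subsingleton :=
      subsingleton_inter_Icc_of_strictAntiOn hA hg subset_closure ha hc (hab.trans hcb.symm).le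
    have hA_Ioo : (A ∩ Ioo a c).Subsingleton :=
      hA_Icc.anti (inter_subset_inter_right _ Ioo_subset_Icc_self)
    have hclosure_Ioo : (closure A ∩ Ioo a c).Subsingleton :=
      subsingleton_closure_inter_of_isOpen isOpen_Ioo hA_Ioo
    exact encard_le_one_iff_subsingleton.2
      (hclosure_Ioo.anti (inter_subset_inter_left _ inter_subset_left))
  exact encard_le_add_two_of_encard_inter_Ioo_le encard_inter_Ioo_le

/-- If `f` is strictly decreasing on `A ⊆ ℝ` and `g` is a
non-increasing function on `cl(A)` agreeing with `f` on `A`, then every fiber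
of `g` (within `cl(A)`) has at most 3 points. -/
theorem stmt6 (A : Set ℝ) (f g : ℝ → ℝ) (hf : StrictAntiOn f A)
    (hg : AntitoneOn g (closure A)) (hgf : ∀ x ∈ A, g x = f x) (b : ℝ) :
    (closure A ∩ g ⁻¹' {b}).encard ≤ 3 :=
  stmt6_general (hf.congr fun x hx => (hgf x hx).symm) hg b
end

section
/- Let E ⊆ ℝ have the following property: for every n ≥ 1 and every uncountable A ⊆ Eⁿ, there is no one-to-one function f : A → E that is continuous with respect to the Euclidean topology and satisfies f(z₁,…,zₙ) ∉ {z₁,…,zₙ} for every (z₁,…,zₙ) ∈ A. Then E is entangled. -/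
/-- A family of `n`-tuples is pairwise disjoint if distinct tuples share no
coordinate values. -/
def PairwiseDisjointTuples {n : ℕ} (A : Set (Fin n → ℝ)) : Prop :=
  ∀ x ∈ A, ∀ y ∈ A, x ≠ y → ∀ i j, x i ≠ y j

/-- `L ⊆ ℝ` is `n`-entangled: for every family `A ⊆ Lⁿ` of pairwise disjoint
`n`-tuples of distinct elements with `|A| = ℵ₁` and every `s ∈ 2ⁿ` there are
distinct `x, y ∈ A` with `x i < y i ↔ s i = 0` for all `i`. -/
def NEntangled (L : Set ℝ) (n : ℕ) : Prop :=
  ∀ A : Set (Fin n → ℝ),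
    (∀ x ∈ A, ∀ i, x i ∈ L) →
    (∀ x ∈ A, Function.Injective x) →
    PairwiseDisjointTuples A →
    Cardinal.mk A = Cardinal.aleph 1 →
    ∀ s : Fin n → Fin 2, ∃ x ∈ A, ∃ y ∈ A, x ≠ y ∧ ∀ i, (x i < y i ↔ s i = 0)

/-- `L ⊆ ℝ` is entangled if it is `n`-entangled for every `n ≥ 1`. -/
def Entangled (L : Set ℝ) : Prop := ∀ n : ℕ, 1 ≤ n → NEntangled L n

/-!
Induct on `n`. If a pattern of length `n + 1` is realized by no pair from an uncountable disjoint
family, view the family as the graph of the function `f` sending the last `n` coordinates of a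
member to its first coordinate. Then `f` is monotone or antitone along the relation "the pair
`(x, y)` realizes the remaining pattern of length `n`". This relation is open, and by induction
every uncountable set of truncated tuples contains a related pair. Hence, as for a monotone function
on a line, `f` has only countably many discontinuities, and off them it is the forbidden continuous
injection.
-/

section Discontinuities

open Set

variable {X Y : Type*} [TopologicalSpace Y] {R : Y → Y → Prop}

theorem countable_frontier_of_forall_rel_mem (hRo : IsOpen {p : Y × Y | R p.1 p.2})
    (hR : ∀ U : Set Y, ¬U.Countable → ∃ x ∈ U, ∃ y ∈ U, R x y) {S : Set Y}
    (hS : ∀ x y, R x y → y ∈ S → x ∈ S) : (frontier S).Countable := by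
  have hinside : (S ∩ closure Sᶜ).Countable := by
    by_contra hunc
    obtain ⟨x, hx, y, hy, hxy⟩ := hR _ hunc
    have hleft : IsOpen {x' | R x' y} := hRo.preimage (Continuous.prodMk_left y)
    obtain ⟨x', hx'y, hx'S⟩ := mem_closure_iff.1 hx.2 _ hleft hxy
    exact hx'S (hS x' y hx'y hy.1)
  have houtside : (Sᶜ ∩ closure S).Countable := by
    by_contra hunc
    obtain ⟨x, hx, y, hy, hxy⟩ := hR _ hunc
    have hright : IsOpen {y' | R x y'} := hRo.preimage (Continuous.prodMk_right x)
    obtain ⟨y', hxy', hy'S⟩ := mem_closure_iff.1 hy.2 _ hright hxy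
    exact hx.1 (hS x y' hxy' hy'S)
  refine (hinside.union houtside).mono fun z hz => ?_
  rw [frontier_eq_closure_inter_closure] at hz
  exact (em (z ∈ S)).imp (fun h => ⟨h, hz.2⟩) (fun h => ⟨h, hz.1⟩)

theorem exists_countable_forall_lt_exists_mem_Ioc (X : Type*) [LinearOrder X]
    [TopologicalSpace X] [OrderTopology X] [SecondCountableTopology X] :
    ∃ D : Set X, D.Countable ∧ ∀ a b, a < b → ∃ d ∈ D, d ∈ Ioc a b := by
  obtain ⟨D, hDc, hD⟩ := TopologicalSpace.exists_countable_dense X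
  refine ⟨D ∪ {b | ∃ a, a ⋖ b}, hDc.union countable_setOfPred_covBy_left, fun a b hab => ?_⟩
  by_cases hcov : a ⋖ b
  · exact ⟨b, .inr ⟨a, hcov⟩, hab, le_rfl⟩
  · obtain ⟨d, hdD, hd⟩ := hD.exists_mem_open isOpen_Ioo ((not_covBy_iff hab).1 hcov)
    exact ⟨d, .inl hdD, Ioo_subset_Ioc_self hd⟩

variable [LinearOrder X] [TopologicalSpace X] [OrderTopology X]

theorem exists_mem_frontier_of_not_continuousAt {D : Set X}
    (hD : ∀ a b, a < b → ∃ d ∈ D, d ∈ Ioc a b) {f : Y → X} {z : Y} (hz : ¬ContinuousAt f z) :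
    ∃ d ∈ D, z ∈ frontier {y | d ≤ f y} := by
  simp only [frontier_eq_closure_inter_closure, mem_inter_iff, mem_closure_iff_frequently]
  rw [ContinuousAt, tendsto_order, not_and_or] at hz
  push Not at hz
  obtain ⟨a, haz, hfreq⟩ | ⟨a, hza, hfreq⟩ := hz
  · obtain ⟨d, hdD, had, hdz⟩ := hD a (f z) haz
    have hz : z ∈ closure {y | d ≤ f y} := subset_closure hdz
    exact ⟨d, hdD, mem_closure_iff_frequently.1 hz,
      hfreq.mono fun y hy => not_le.2 (hy.trans_lt had)⟩
  · obtain ⟨d, hdD, hzd, hda⟩ := hD (f z) a hza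
    have hz : z ∈ closure {y | d ≤ f y}ᶜ := subset_closure (not_le.2 hzd)
    exact ⟨d, hdD, hfreq.mono fun y hy => hda.trans hy, mem_closure_iff_frequently.1 hz⟩

variable [SecondCountableTopology X]

theorem countable_not_continuousAt_of_forall_rel_le (hRo : IsOpen {p : Y × Y | R p.1 p.2})
    (hR : ∀ U : Set Y, ¬U.Countable → ∃ x ∈ U, ∃ y ∈ U, R x y) {f : Y → X}
    (hf : ∀ x y, R x y → f y ≤ f x) : {z | ¬ContinuousAt f z}.Countable := by
  obtain ⟨D, hDc, hD⟩ := exists_countable_forall_lt_exists_mem_Ioc X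
  have hfrontier (d : X) : (frontier {y | d ≤ f y}).Countable :=
    countable_frontier_of_forall_rel_mem hRo hR fun x y hxy hdy => le_trans hdy (hf x y hxy)
  refine (hDc.biUnion fun d _ => hfrontier d).mono fun z hz => ?_
  simpa only [mem_iUnion, exists_prop] using exists_mem_frontier_of_not_continuousAt hD hz

theorem countable_not_continuousWithinAt_of_forall_rel_le (hRo : IsOpen {p : Y × Y | R p.1 p.2})
    {B : Set Y} (hR : ∀ U ⊆ B, ¬U.Countable → ∃ x ∈ U, ∃ y ∈ U, R x y) {f : Y → X}
    (hf : ∀ x ∈ B, ∀ y ∈ B, R x y → f y ≤ f x) :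
    {z ∈ B | ¬ContinuousWithinAt f B z}.Countable := by
  have hcount : {z : B | ¬ContinuousAt (B.domRestrict f) z}.Countable := by
    refine countable_not_continuousAt_of_forall_rel_le (R := fun x y : B => R x y)
      (hRo.preimage (continuous_subtype_val.prodMap continuous_subtype_val)) (fun U hU => ?_)
      fun x y => hf x x.2 y y.2
    have hU' : ¬(Subtype.val '' U).Countable := fun h =>
      hU (countable_of_injective_of_countable_image Subtype.val_injective.injOn h)
    obtain ⟨_, ⟨x, hx, rfl⟩, _, ⟨y, hy, rfl⟩, hxy⟩ :=
      hR _ (Subtype.coe_image_subset B U) hU'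
    exact ⟨x, hx, y, hy, hxy⟩
  refine (hcount.image Subtype.val).mono ?_
  rintro z ⟨hzB, hz⟩
  exact ⟨⟨z, hzB⟩, fun h => hz ((continuousWithinAt_iff_continuousAt_domRestrict f hzB).2 h), rfl⟩

end Discontinuities

section Families

open Set

variable {X ι κ : Type*}

/-- A family of pairwise disjoint tuples of distinct elements of `E`: the families over which
`NEntangled` quantifies, of any cardinality and with entries in any type. -/
structure IsDisjointFamily (E : Set X) (A : Set (ι → X)) : Prop where
  mem : ∀ x ∈ A, ∀ i, x i ∈ E
  injective : ∀ x ∈ A, Function.Injective x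
  pairwiseDisjoint : A.PairwiseDisjoint range

theorem PairwiseDisjointTuples.pairwiseDisjoint_range {n : ℕ} {A : Set (Fin n → ℝ)}
    (hA : PairwiseDisjointTuples A) : A.PairwiseDisjoint range := fun x hx y hy hxy => by
  rw [Function.onFun, disjoint_left]
  rintro _ ⟨i, rfl⟩ ⟨j, hij⟩
  exact hA x hx y hy hxy i j hij.symm

namespace IsDisjointFamily

variable {E : Set X} {A B : Set (ι → X)}

theorem mono (hA : IsDisjointFamily E A) (hBA : B ⊆ A) : IsDisjointFamily E B where
  mem x hx := hA.mem x (hBA hx)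
  injective x hx := hA.injective x (hBA hx)
  pairwiseDisjoint := hA.pairwiseDisjoint.subset hBA

theorem eq_of_apply_eq (hA : IsDisjointFamily E A) {x y : ι → X} (hx : x ∈ A) (hy : y ∈ A)
    {i j : ι} (hij : x i = y j) : x = y :=
  hA.pairwiseDisjoint.elim_set hx hy (x i) (mem_range_self i) (hij ▸ mem_range_self j)

theorem image_comp (hA : IsDisjointFamily E A) {e : κ → ι} (he : Function.Injective e) :
    IsDisjointFamily E ((fun x : ι → X => x ∘ e) '' A) where
  mem := by
    rintro _ ⟨x, hx, rfl⟩ k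
    exact hA.mem x hx (e k)
  injective := by
    rintro _ ⟨x, hx, rfl⟩
    exact (hA.injective x hx).comp he
  pairwiseDisjoint := by
    rintro _ ⟨x, hx, rfl⟩ _ ⟨y, hy, rfl⟩ hxy
    exact (hA.pairwiseDisjoint hx hy (mt (congrArg (· ∘ e)) hxy)).mono
      (range_comp_subset_range e x) (range_comp_subset_range e y)

theorem injOn_comp [Nonempty κ] (hA : IsDisjointFamily E A) (e : κ → ι) :
    A.InjOn fun x : ι → X => x ∘ e := fun _ hx _ hy hxy =>
  hA.eq_of_apply_eq hx hy (congrFun hxy (Classical.arbitrary κ))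

theorem exists_cons_mem {n : ℕ} [NeZero n] {A : Set (Fin (n + 1) → X)}
    (hA : IsDisjointFamily E A) (hunc : ¬A.Countable) :
    ∃ (B : Set (Fin n → X)) (f : (Fin n → X) → X), IsDisjointFamily E B ∧ ¬B.Countable ∧
      ∀ z ∈ B, (Fin.cons (f z) z : Fin (n + 1) → X) ∈ A := by
  have hcons : ∀ z ∈ (fun x : Fin (n + 1) → X => x ∘ Fin.succ) '' A,
      ∃ t, (Fin.cons t z : Fin (n + 1) → X) ∈ A := by
    rintro _ ⟨x, hx, rfl⟩
    exact ⟨x 0, (Fin.cons_self_tail x).symm ▸ hx⟩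
  obtain ⟨x, -⟩ : A.Nonempty := nonempty_iff_ne_empty.2 fun h => hunc (h ▸ countable_empty)
  have : Nonempty X := ⟨x 0⟩
  choose! f hf using hcons
  exact ⟨_, f, hA.image_comp (Fin.succ_injective n), fun h =>
    hunc (countable_of_injective_of_countable_image (hA.injOn_comp Fin.succ) h), hf⟩

section Graph

variable {n : ℕ} {A : Set (Fin (n + 1) → X)} {B : Set (Fin n → X)} {f : (Fin n → X) → X}

theorem mapsTo_of_cons_mem (hA : IsDisjointFamily E A)
    (hf : ∀ z ∈ B, (Fin.cons (f z) z : Fin (n + 1) → X) ∈ A) : MapsTo f B E :=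
  fun z hz => hA.mem _ (hf z hz) 0

theorem injOn_of_cons_mem (hA : IsDisjointFamily E A)
    (hf : ∀ z ∈ B, (Fin.cons (f z) z : Fin (n + 1) → X) ∈ A) : InjOn f B :=
  fun z hz w hw hzw => (Fin.cons_inj.1 <|
    hA.eq_of_apply_eq (hf z hz) (hf w hw) (i := 0) (j := 0) hzw).2

theorem ne_apply_of_cons_mem (hA : IsDisjointFamily E A)
    (hf : ∀ z ∈ B, (Fin.cons (f z) z : Fin (n + 1) → X) ∈ A) : ∀ z ∈ B, ∀ i, f z ≠ z i :=
  fun z hz i h => (Fin.cons_injective_iff.1 (hA.injective _ (hf z hz))).1 ⟨i, h.symm⟩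

end Graph

end IsDisjointFamily

end Families

section Patterns

open Set

variable {X : Type*} [LinearOrder X]

/-- The pair `(x, y)` realizes the sign pattern `s`. Unlike the condition `x i < y i ↔ s i = 0` of
`NEntangled`, this is strict in both cases, so that it is an open condition on `(x, y)`. -/
def Realizes {ι : Type*} (s : ι → Fin 2) (x y : ι → X) : Prop :=
  ∀ i, if s i = 0 then x i < y i else y i < x i

/-- Every pattern `s ∈ 2ⁿ` is realized in every uncountable disjoint family of `n`-tuples from `E`:
the form of `n`-entangledness, with "uncountable" in place of "of size `ℵ₁`", that is proved by
induction on `n`. -/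
def RealizesPatterns (E : Set X) (n : ℕ) : Prop :=
  ∀ A : Set (Fin n → X), IsDisjointFamily E A → ¬A.Countable →
    ∀ s : Fin n → Fin 2, ∃ x ∈ A, ∃ y ∈ A, Realizes s x y

theorem realizes_cons_iff {n : ℕ} {s : Fin (n + 1) → Fin 2} {a b : X} {x y : Fin n → X} :
    Realizes s (Fin.cons a x) (Fin.cons b y) ↔
      (if s 0 = 0 then a < b else b < a) ∧ Realizes (Fin.tail s) x y :=
  Fin.forall_fin_succ

theorem Realizes.lt_iff {ι : Type*} {s : ι → Fin 2} {x y : ι → X} (h : Realizes s x y) (i : ι) :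
    x i < y i ↔ s i = 0 := by
  have hi := h i
  split_ifs at hi with hs
  · exact iff_of_true hi hs
  · exact iff_of_false hi.asymm hs

theorem Realizes.ne {ι : Type*} [Nonempty ι] {s : ι → Fin 2} {x y : ι → X}
    (h : Realizes s x y) : x ≠ y := by
  rintro rfl
  simpa only [lt_self_iff_false, ite_self] using h (Classical.arbitrary ι)

theorem realizesPatterns_one (E : Set X) : RealizesPatterns E 1 := by
  intro A hA hunc s
  obtain ⟨x, hx, y, hy, hxy⟩ : A.Nontrivial :=
    not_subsingleton_iff.1 fun h => hunc h.countable
  wlog hlt : x 0 < y 0 generalizing x y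
  · have hne : x 0 ≠ y 0 := fun h => hxy (hA.eq_of_apply_eq hx hy h)
    exact this y hy x hx hxy.symm (hne.lt_or_gt.resolve_left hlt)
  by_cases hs : s 0 = 0
  · exact ⟨x, hx, y, hy, Fin.forall_fin_one.2 (by rwa [if_pos hs])⟩
  · exact ⟨y, hy, x, hx, Fin.forall_fin_one.2 (by rwa [if_neg hs])⟩

theorem isOpen_realizes [TopologicalSpace X] [OrderClosedTopology X] {ι : Type*} [Finite ι]
    (s : ι → Fin 2) :
    IsOpen {p : (ι → X) × (ι → X) | Realizes s p.1 p.2} := by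
  simp only [Realizes, ofPred_forall]
  refine isOpen_iInter_of_finite fun i => ?_
  split_ifs
  · exact isOpen_lt (by fun_prop) (by fun_prop)
  · exact isOpen_lt (by fun_prop) (by fun_prop)

variable [TopologicalSpace X] [OrderTopology X] [SecondCountableTopology X] {E : Set X} {n : ℕ}

theorem RealizesPatterns.countable_not_continuousWithinAt (hE : RealizesPatterns E n)
    {A : Set (Fin (n + 1) → X)} {s : Fin (n + 1) → Fin 2}
    (hs : ∀ x ∈ A, ∀ y ∈ A, ¬Realizes s x y) {B : Set (Fin n → X)} (hB : IsDisjointFamily E B)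
    {f : (Fin n → X) → X} (hf : ∀ z ∈ B, (Fin.cons (f z) z : Fin (n + 1) → X) ∈ A) :
    {z ∈ B | ¬ContinuousWithinAt f B z}.Countable := by
  have hpair : ∀ U ⊆ B, ¬U.Countable → ∃ x ∈ U, ∃ y ∈ U, Realizes (Fin.tail s) x y :=
    fun U hUB hU => hE U (hB.mono hUB) hU _
  have hopen := isOpen_realizes (X := X) (Fin.tail s)
  have hfree : ∀ x ∈ B, ∀ y ∈ B, Realizes (Fin.tail s) x y →
      ¬if s 0 = 0 then f x < f y else f y < f x :=
    fun x hx y hy hxy h0 => hs _ (hf x hx) _ (hf y hy) (realizes_cons_iff.2 ⟨h0, hxy⟩)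
  by_cases hs0 : s 0 = 0
  · simp only [hs0, if_true, not_lt] at hfree
    exact countable_not_continuousWithinAt_of_forall_rel_le hopen hpair hfree
  · simp only [hs0, if_false, not_lt] at hfree
    refine countable_not_continuousWithinAt_of_forall_rel_le
      (R := fun x y => Realizes (Fin.tail s) y x) (hopen.preimage continuous_swap)
      (fun U hUB hU => ?_) fun x hx y hy hyx => hfree y hy x hx hyx
    obtain ⟨x, hx, y, hy, hxy⟩ := hpair U hUB hU
    exact ⟨y, hy, x, hx, hxy⟩

theorem RealizesPatterns.exists_continuousOn_of_forall_not_realizes [NeZero n]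
    (hE : RealizesPatterns E n) {A : Set (Fin (n + 1) → X)} (hA : IsDisjointFamily E A)
    (hunc : ¬A.Countable) {s : Fin (n + 1) → Fin 2}
    (hs : ∀ x ∈ A, ∀ y ∈ A, ¬Realizes s x y) :
    ∃ C : Set (Fin n → X), IsDisjointFamily E C ∧ ¬C.Countable ∧
      ∃ f : (Fin n → X) → X, InjOn f C ∧ ContinuousOn f C ∧ MapsTo f C E ∧
        ∀ z ∈ C, ∀ i, f z ≠ z i := by
  obtain ⟨B, f, hB, hBunc, hf⟩ := hA.exists_cons_mem hunc
  have hdisc := hE.countable_not_continuousWithinAt hs hB hf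
  have hCB : {z ∈ B | ContinuousWithinAt f B z} ⊆ B := sep_subset _ _
  have hfC := fun z hz => hf z (hCB hz)
  have hcover : B ⊆ {z ∈ B | ContinuousWithinAt f B z} ∪ {z ∈ B | ¬ContinuousWithinAt f B z} :=
    fun z hz => (em (ContinuousWithinAt f B z)).imp (fun h => ⟨hz, h⟩) (fun h => ⟨hz, h⟩)
  exact ⟨_, hB.mono hCB, fun hC => hBunc ((hC.union hdisc).mono hcover), f,
    hA.injOn_of_cons_mem hfC, fun z hz => hz.2.mono hCB, hA.mapsTo_of_cons_mem hfC,
    hA.ne_apply_of_cons_mem hfC⟩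

end Patterns

theorem stmt7_general {X : Type*} [LinearOrder X] [TopologicalSpace X] [OrderTopology X]
    [SecondCountableTopology X] (E : Set X)
    (hE : ∀ n : ℕ, 1 ≤ n → ∀ A : Set (Fin n → X), IsDisjointFamily E A → ¬A.Countable →
      ¬∃ f : (Fin n → X) → X, Set.InjOn f A ∧ ContinuousOn f A ∧
        Set.MapsTo f A E ∧ ∀ z ∈ A, ∀ i, f z ≠ z i)
    (n : ℕ) (hn : 1 ≤ n) (A : Set (Fin n → X)) (hA : IsDisjointFamily E A) (hunc : ¬A.Countable)
    (s : Fin n → Fin 2) : ∃ x ∈ A, ∃ y ∈ A, x ≠ y ∧ ∀ i, (x i < y i ↔ s i = 0) := by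
  have hpat (m : ℕ) (hm : 1 ≤ m) : RealizesPatterns E m := by
    induction m, hm using Nat.le_induction with
    | base => exact realizesPatterns_one E
    | succ m hm ih =>
      have : NeZero m := ⟨Nat.one_le_iff_ne_zero.1 hm⟩
      intro B hB hBunc t
      by_contra! ht
      obtain ⟨C, hC, hCunc, hf⟩ := ih.exists_continuousOn_of_forall_not_realizes hB hBunc ht
      exact hE m hm C hC hCunc hf
  have : NeZero n := ⟨Nat.one_le_iff_ne_zero.1 hn⟩
  obtain ⟨x, hx, y, hy, hxy⟩ := hpat n hn A hA hunc s
  exact ⟨x, hx, y, hy, hxy.ne, hxy.lt_iff⟩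

/-- If for every `n ≥ 1` and every uncountable `A ⊆ Eⁿ` there is
no one-to-one Euclidean-continuous `f : A → E` with `f z ∉ {z₁, …, zₙ}` for all
`z ∈ A`, then `E` is entangled. -/
theorem stmt7 (E : Set ℝ)
    (hE : ∀ n : ℕ, 1 ≤ n → ∀ A : Set (Fin n → ℝ),
      (∀ x ∈ A, ∀ i, x i ∈ E) → ¬A.Countable →
      ¬∃ f : (Fin n → ℝ) → ℝ, Set.InjOn f A ∧ ContinuousOn f A ∧
        Set.MapsTo f A E ∧ ∀ z ∈ A, ∀ i, f z ≠ z i) :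
    Entangled E := by
  intro n hn A hmem hinj hdisj hcard s
  exact stmt7_general E (fun m hm B hB => hE m hm B hB.mem) n hn A
    ⟨hmem, hinj, hdisj.pairwiseDisjoint_range⟩
    (fun hA => Cardinal.aleph0_lt_aleph_one.not_ge (hcard ▸ hA.le_aleph0)) s
end

section
/- Assume the Continuum Hypothesis. Then there exists an uncountable set E ⊆ ℝ such that: (1) for every n ≥ 1 and every uncountable A ⊆ Eⁿ, there is no one-to-one function f : A → E that is continuous with respect to the Euclidean topology and satisfies f(z₁,…,zₙ) ∉ {z₁,…,zₙ} for every (z₁,…,zₙ) ∈ A; and (2) ℚ ⊆ E, ℚ is not a relative Gδ-set in E with respect to the Euclidean subspace topology, and E is concentrated on ℚ. -/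
/-- The Continuum Hypothesis: `2^ℵ₀ = ℵ₁`. -/
def ContinuumHypothesis : Prop :=
  Cardinal.continuum.{0} = Cardinal.aleph.{0} 1

/-!
Let `W` be a well-order of type `ω₁`. By CH the `Gδ` subsets of all the powers `Xⁿ` can be
enumerated along `W`, so a transfinite recursion yields points `x a`, `a ∈ W`, avoiding all the
meagre sections with parameters in `Q` or among the earlier points of the `Gδ` sets enumerated
before `a`: these are countably many, so Baire's theorem applies. Put `E = Q ∪ {x a | a ∈ W}`. An
open set containing the dense set `Q` has closed nowhere dense complement, which contains only
countably many `x a`; hence `E` is concentrated on `Q`.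

A continuous `f : A → E` with `A ⊆ Eⁿ` has its graph inside a `Gδ` set `G` in which the value is
still determined by the argument. Let `(y, z) ∈ G` be a point of the graph and `x a` the latest
term among its coordinates. For late `a`, the set of all `t` for which replacing `x a` by `t`
stays in `G` is nonmeagre. So `x a` is not the value `y`, as otherwise that set would be a
singleton; and if `x a` occurs among the arguments, then replacing membership in `G` by "for
comeagrely many `t` in `I`" for a suitable basic open `I` eliminates these arguments and leaves a
`Gδ` set which still determines `y`. By induction on the number of coordinates outside `Q`, `f`
takes only countably many values.
-/

open Filter Set TopologicalSpace Topology

universe u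

section Baire

variable {X : Type*} [TopologicalSpace X]

theorem isMeagre_of_countable [T1Space X] [PerfectSpace X] {P : Set X} (hP : P.Countable) :
    IsMeagre P := by
  rw [← biUnion_of_singleton P]
  refine isMeagre_biUnion hP fun p _ => IsNowhereDense.isMeagre ?_
  rw [IsNowhereDense, closure_singleton, interior_singleton]

theorem nonempty_inter_iInter_of_subset_closure [BaireSpace X] {κ : Type*} [Countable κ]
    {I : Set X} {T : κ → Set X} (hI : IsOpen I) (hne : I.Nonempty) (hT : ∀ k, IsOpen (T k))
    (hIT : ∀ k, I ⊆ closure (T k)) : (I ∩ ⋂ k, T k).Nonempty := by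
  have hdense : Dense (⋂ k, (T k ∪ (closure I)ᶜ)) := by
    refine dense_iInter_of_isOpen (fun k => (hT k).union isClosed_closure.isOpen_compl)
      fun k t => ?_
    rw [closure_union]
    by_cases ht : t ∈ closure I
    · exact Or.inl (closure_minimal (hIT k) isClosed_closure ht)
    · exact Or.inr (subset_closure ht)
  obtain ⟨t, htI, ht⟩ := hdense.inter_open_nonempty I hI hne
  rw [mem_iInter] at ht
  exact ⟨t, htI, mem_iInter.2 fun k => (ht k).resolve_right (not_not.2 (subset_closure htI))⟩

theorem subset_closure_iff_of_isTopologicalBasis {B : Set (Set X)}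
    (hB : IsTopologicalBasis B) {I T : Set X} :
    I ⊆ closure T ↔ ∀ J ∈ B, (J ∩ I).Nonempty → (J ∩ T).Nonempty := by
  simp only [subset_def, hB.mem_closure_iff]
  exact ⟨fun h J hJ ⟨u, huJ, huI⟩ => h u huI J hJ huJ, fun h u huI J hJ huJ => h J hJ ⟨u, huJ, huI⟩⟩

end Baire

section Concentrated

variable {X : Type*} [TopologicalSpace X] {E D : Set X}

/-- `E` is concentrated on `D`: every open set containing `D` contains all but countably many
points of `E`. As in the literature, `D ⊆ E` is not required. -/
def IsConcentratedOn (E D : Set X) : Prop :=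
  ∀ U : Set X, IsOpen U → D ⊆ U → (E \ U).Countable

theorem IsConcentratedOn.countable_sdiff_of_isGδ (h : IsConcentratedOn E D) {G : Set X}
    (hG : IsGδ G) (hDG : D ⊆ G) : (E \ G).Countable := by
  obtain ⟨U, hU, rfl⟩ := hG.eq_iInter_nat
  rw [sdiff_iInter]
  exact countable_iUnion fun m => h (U m) (hU m) (hDG.trans (iInter_subset U m))

theorem exists_isGδ_preimage_val_eq {G : Set E} (hG : IsGδ G) :
    ∃ H : Set X, IsGδ H ∧ Subtype.val ⁻¹' H = G := by
  obtain ⟨O, hO, rfl⟩ := hG.eq_iInter_nat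
  choose U hU hUO using fun m => isOpen_induced_iff.1 (hO m)
  exact ⟨⋂ m, U m, .iInter_of_isOpen hU, by simp only [preimage_iInter, hUO]⟩

theorem IsConcentratedOn.not_isGδ (h : IsConcentratedOn E D) (hD : D.Countable) (hDE : D ⊆ E)
    (hE : ¬E.Countable) : ¬IsGδ (Subtype.val ⁻¹' D : Set E) := by
  intro hG
  obtain ⟨H, hH, hHD⟩ := exists_isGδ_preimage_val_eq hG
  rw [Subtype.preimage_val_eq_preimage_val_iff] at hHD
  have hDH : D ⊆ H := fun d hd => (hHD.ge ⟨hDE hd, hd⟩).2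
  refine hE (((h.countable_sdiff_of_isGδ hH hDH).union hD).mono fun e he => ?_)
  exact (em (e ∈ H)).symm.imp (fun heH => ⟨he, heH⟩) fun heH => (hHD.le ⟨he, heH⟩).2

end Concentrated

section GraphExtension

variable {α Y : Type*} [TopologicalSpace α]

theorem isOpen_setOf_oscillationWithin_lt [PseudoEMetricSpace Y] (f : α → Y) (A : Set α)
    (ε : ENNReal) : IsOpen {z | oscillationWithin f A z < ε} := by
  refine isOpen_iff_mem_nhds.2 fun z hz => ?_
  simp only [oscillationWithin, mem_ofPred_eq, iInf_lt_iff] at hz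
  obtain ⟨S, hS, hSε⟩ := hz
  filter_upwards [eventually_nhds_nhdsWithin.2 (Filter.mem_map.1 hS)] with w hw
  exact (biInf_le Metric.ediam (Filter.mem_map.2 hw)).trans_lt hSε

theorem isGδ_setOf_oscillationWithin_eq_zero [PseudoEMetricSpace Y] (f : α → Y) (A : Set α) :
    IsGδ {z | oscillationWithin f A z = 0} := by
  have : {z | oscillationWithin f A z = 0} =
      ⋂ m : ℕ, {z | oscillationWithin f A z < (m : ENNReal)⁻¹} := by
    ext z
    simp only [mem_ofPred_eq, mem_iInter]
    refine ⟨fun hz m => by simp [hz], fun hz => by_contra fun hne => ?_⟩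
    obtain ⟨m, hm⟩ := ENNReal.exists_inv_nat_lt hne
    exact (hz m).not_gt hm
  rw [this]
  exact .iInter_of_isOpen fun m => isOpen_setOf_oscillationWithin_lt f A _

theorem edist_le_oscillationWithin_of_mem_closure_graphOn [PseudoEMetricSpace Y] {f : α → Y}
    {A : Set α} {z : α} {y y' : Y} (hy : (z, y) ∈ closure (A.graphOn f))
    (hy' : (z, y') ∈ closure (A.graphOn f)) : edist y y' ≤ oscillationWithin f A z := by
  refine le_iInf₂ fun S hS => ?_
  obtain ⟨U, hU, hUS⟩ := mem_nhdsWithin_iff_exists_mem_nhds_inter.1 (Filter.mem_map.1 hS)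
  have mem_closure : ∀ y, (z, y) ∈ closure (A.graphOn f) → y ∈ closure S := by
    refine fun y hy => mem_closure_iff_nhds.2 fun N hN => ?_
    obtain ⟨_, ⟨huU, huN⟩, u, huA, rfl⟩ :=
      mem_closure_iff_nhds.1 hy (U ×ˢ N) (prod_mem_nhds hU hN)
    exact ⟨f u, huN, hUS ⟨huU, huA⟩⟩
  exact (Metric.edist_le_ediam_of_mem (mem_closure y hy) (mem_closure y' hy')).trans_eq
    (Metric.ediam_closure S)

theorem exists_isGδ_injOn_fst_graphOn_subset [PseudoMetrizableSpace α] [TopologicalSpace Y]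
    [MetrizableSpace Y] {f : α → Y} {A : Set α} (hf : ContinuousOn f A) :
    ∃ R : Set (α × Y), IsGδ R ∧ InjOn Prod.fst R ∧ A.graphOn f ⊆ R := by
  let _ := metrizableSpaceMetric Y
  refine ⟨closure (A.graphOn f) ∩ Prod.fst ⁻¹' {z | oscillationWithin f A z = 0}, ?_, ?_, ?_⟩
  · let _ := pseudoMetrizableSpacePseudoMetric α
    exact isClosed_closure.isGδ.inter
      ((isGδ_setOf_oscillationWithin_eq_zero f A).preimage continuous_fst)
  · rintro ⟨z, y⟩ ⟨hy, hz⟩ ⟨_, y'⟩ ⟨hy', -⟩ rfl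
    refine Prod.ext rfl (edist_le_zero.1 ?_)
    exact (edist_le_oscillationWithin_of_mem_closure_graphOn hy hy').trans_eq hz
  · rintro _ ⟨z, hz, rfl⟩
    exact ⟨subset_closure ⟨z, hz, rfl⟩, (hf z hz).oscillationWithin_eq_zero⟩

end GraphExtension

section Substitution

variable {ι X : Type*} {S : Set ι} {k : ι}

open Classical in
/-- `substOn S z t` is the point `z` with all its coordinates in `S` replaced by the common
value `t`. -/
noncomputable def substOn (S : Set ι) (z : ι → X) (t : X) : ι → X :=
  S.piecewise (fun _ => t) z

theorem substOn_apply_of_mem {i : ι} (hi : i ∈ S) (z : ι → X) (t : X) : substOn S z t i = t := by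
  simp [substOn, hi]

theorem substOn_apply_of_notMem {i : ι} (hi : i ∉ S) (z : ι → X) (t : X) :
    substOn S z t i = z i := by
  simp [substOn, hi]

theorem substOn_substOn (S : Set ι) (z : ι → X) (s : X) :
    substOn S (substOn S z s) = substOn S z := by
  ext t i
  by_cases hi : i ∈ S <;> simp [substOn, hi]

theorem substOn_eq_self {z : ι → X} {t : X} (h : ∀ i ∈ S, z i = t) : substOn S z t = z := by
  ext i
  by_cases hi : i ∈ S
  · rw [substOn_apply_of_mem hi, h i hi]
  · exact substOn_apply_of_notMem hi z t

/-- `G ⊆ X^ι` is the graph of a partial function expressing the coordinate `k` through the other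
coordinates. -/
def DeterminesCoord (G : Set (ι → X)) (k : ι) : Prop :=
  ∀ z ∈ G, ∀ w ∈ G, (∀ i ≠ k, z i = w i) → z k = w k

theorem DeterminesCoord.subsingleton_preimage_substOn {G : Set (ι → X)} (hG : DeterminesCoord G k)
    (z : ι → X) : (substOn {k} z ⁻¹' G).Subsingleton := by
  intro s hs t ht
  have h := hG _ hs _ ht fun i hi => by simp only [substOn_apply_of_notMem (S := {k}) hi]
  simpa only [substOn_apply_of_mem (mem_singleton k)] using h

theorem determinesCoord_zero_of_injOn_fst {n : ℕ} {R : Set ((Fin n → X) × X)}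
    (hR : InjOn Prod.fst R) :
    DeterminesCoord ((fun v : Fin (n + 1) → X => (Fin.tail v, v 0)) ⁻¹' R) 0 := by
  intro z hz w hw hzw
  exact congrArg Prod.snd (hR hz hw (funext fun i => hzw i.succ (Fin.succ_ne_zero i)))

variable [TopologicalSpace X]

theorem continuous_substOn (S : Set ι) : Continuous fun p : (ι → X) × X => substOn S p.1 p.2 := by
  refine continuous_pi fun i => ?_
  by_cases hi : i ∈ S
  · simpa only [substOn_apply_of_mem hi] using continuous_snd
  · simp only [substOn_apply_of_notMem hi]
    fun_prop

/-- The points `z` for which every set `{t | substOn S z t ∈ V m}` is dense in `I`. For open `V m`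
and open `I`, this is a `Gδ` substitute for "`substOn S z t ∈ ⋂ m, V m` for comeagrely many
`t ∈ I`". -/
def denseSections (V : ℕ → Set (ι → X)) (I : Set X) (S : Set ι) : Set (ι → X) :=
  {z | ∀ m, I ⊆ closure (substOn S z ⁻¹' V m)}

variable {V : ℕ → Set (ι → X)} {I : Set X}

theorem substOn_mem_denseSections {z : ι → X} {s : X} :
    substOn S z s ∈ denseSections V I S ↔ z ∈ denseSections V I S := by
  simp only [denseSections, mem_ofPred_eq, substOn_substOn]

theorem isGδ_denseSections [SecondCountableTopology X] (hV : ∀ m, IsOpen (V m)) (I : Set X)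
    (S : Set ι) : IsGδ (denseSections V I S) := by
  have : denseSections V I S = ⋂ m, ⋂ J ∈ countableBasis X, ⋂ _ : (J ∩ I).Nonempty,
      ⋃ t ∈ J, (substOn S · t) ⁻¹' V m := by
    ext z
    simp only [denseSections, mem_ofPred_eq, mem_iInter,
      subset_closure_iff_of_isTopologicalBasis (isBasis_countableBasis X), mem_iUnion, exists_prop]
    rfl
  rw [this]
  refine .iInter fun m => .biInter (countable_countableBasis X) fun J _ => .iInter fun _ =>
    (isOpen_biUnion fun t _ => (hV m).preimage ?_).isGδ
  exact (continuous_substOn S).comp (by fun_prop : Continuous fun z : ι → X => (z, t))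

theorem exists_mem_denseSections [SecondCountableTopology X] {z : ι → X}
    (hz : ¬IsMeagre (substOn S z ⁻¹' ⋂ m, V m)) :
    ∃ I ∈ countableBasis X, z ∈ denseSections V I S := by
  obtain ⟨t, ht⟩ : (interior (closure (substOn S z ⁻¹' ⋂ m, V m))).Nonempty :=
    nonempty_iff_ne_empty.2 fun h => hz (IsNowhereDense.isMeagre h)
  obtain ⟨I, hI, -, hIsub⟩ :=
    (isBasis_countableBasis X).exists_subset_of_mem_open ht isOpen_interior
  exact ⟨I, hI, fun m => (hIsub.trans interior_subset).trans
    (closure_mono (preimage_mono (iInter_subset V m)))⟩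

theorem DeterminesCoord.denseSections [BaireSpace X] (hG : DeterminesCoord (⋂ m, V m) k)
    (hV : ∀ m, IsOpen (V m)) (hI : IsOpen I) (hne : I.Nonempty) (hk : k ∉ S) :
    DeterminesCoord (denseSections V I S) k := by
  intro z hz w hw hzw
  have isOpen_section (v : ι → X) (m : ℕ) : IsOpen (substOn S v ⁻¹' V m) :=
    (hV m).preimage ((continuous_substOn S).comp (by fun_prop : Continuous fun t : X => (v, t)))
  obtain ⟨t, -, ht⟩ := nonempty_inter_iInter_of_subset_closure hI hne
    (T := Sum.elim (fun m => substOn S z ⁻¹' V m) fun m => substOn S w ⁻¹' V m)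
    (Sum.rec (isOpen_section z) (isOpen_section w)) (Sum.rec hz hw)
  rw [mem_iInter, Sum.forall] at ht
  have h := hG _ (mem_iInter.2 ht.1) _ (mem_iInter.2 ht.2) fun i hi => by
    by_cases hiS : i ∈ S
    · simp only [substOn_apply_of_mem hiS]
    · simp only [substOn_apply_of_notMem hiS, hzw i hi]
  simpa only [substOn_apply_of_notMem hk] using h

end Substitution

section SeparatedPoints

variable {ι X : Type*} {E Q : Set X} {S : Set ι} {k : ι} {z : ι → X} {q : X}

/-- The points of `E^ι` whose coordinate `k` lies outside `Q` and differs from all the others. -/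
def separatedPoints (E Q : Set X) (k : ι) : Set (ι → X) :=
  {z | (∀ i, z i ∈ E) ∧ z k ∉ Q ∧ ∀ i, z i = z k → i = k}

theorem substOn_mem_separatedPoints (hz : z ∈ separatedPoints E Q k) (hqE : q ∈ E)
    (hqQ : q ∈ Q) (hk : k ∉ S) : substOn S z q ∈ separatedPoints E Q k := by
  obtain ⟨hzE, hkQ, hne⟩ := hz
  simp only [separatedPoints, mem_ofPred_eq, substOn_apply_of_notMem hk]
  refine ⟨fun i => ?_, hkQ, fun i hi => ?_⟩ <;> by_cases hiS : i ∈ S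
  · rwa [substOn_apply_of_mem hiS]
  · rw [substOn_apply_of_notMem hiS]
    exact hzE i
  · rw [substOn_apply_of_mem hiS] at hi
    exact absurd (hi ▸ hqQ) hkQ
  · rw [substOn_apply_of_notMem hiS] at hi
    exact hne i hi

theorem ncard_substOn_notMem_lt [Finite ι] (hq : q ∈ Q) {i : ι} (hiS : i ∈ S) (hi : z i ∉ Q) :
    {j | substOn S z q j ∉ Q}.ncard < {j | z j ∉ Q}.ncard := by
  refine ncard_lt_ncard ⟨fun j hj => ?_, fun h => ?_⟩
  · have hjS : j ∉ S := fun hjS => hj (by rwa [substOn_apply_of_mem hjS])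
    simpa only [mem_ofPred_eq, substOn_apply_of_notMem hjS] using hj
  · exact h hi (by rwa [substOn_apply_of_mem hiS])

end SeparatedPoints

section GenericSequence

variable {W X : Type*}

theorem exists_forall_image_Iio [Preorder W] [WellFoundedLT W] (hW : ∀ a : W, (Iio a).Countable)
    {p : W → Set X → X → Prop} (h : ∀ a P, P.Countable → ∃ t, p a P t) :
    ∃ x : W → X, ∀ a, p a (x '' Iio a) (x a) := by
  cases isEmpty_or_nonempty W
  · exact ⟨isEmptyElim, isEmptyElim⟩
  have : Nonempty X := ‹Nonempty W›.elim fun a => ⟨(h a ∅ countable_empty).choose⟩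
  choose! pick hpick using h
  let x : W → X := wellFounded_lt.fix fun a ih => pick a (range fun b : Iio a => ih b b.2)
  have hx (a : W) : x a = pick a (x '' Iio a) := by
    rw [image_eq_range]
    exact wellFounded_lt.fix_eq _ a
  refine ⟨x, fun a => ?_⟩
  rw [hx a]
  exact hpick a _ ((hW a).image x)

variable [TopologicalSpace X] {Q P : Set X} {x : W → X}

/-- A sequence `x` is generic over `Q` if it is injective with values outside `Q`, and if, for each
`Gδ` set `G ⊆ Xⁿ`, its late terms `x a` avoid all the meagre sections of `G`, along a diagonal
`{z | z i = z j for all i, j ∈ S}`, whose parameters lie in `Q` or are earlier terms. -/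
structure IsGenericOver [Preorder W] (Q : Set X) (x : W → X) : Prop where
  notMem : ∀ a, x a ∉ Q ∪ x '' Iio a
  exists_forall_notMem : ∀ (n : ℕ) (G : Set (Fin n → X)), IsGδ G → ∃ b, ∀ a, b < a → ∀ S z,
    (∀ i ∉ S, z i ∈ Q ∪ x '' Iio a) → IsMeagre (substOn S z ⁻¹' G) → substOn S z (x a) ∉ G

/-- The union of all meagre sections, with parameters in `P`, of the sets in the families `𝒢 n`. -/
def meagreSections (𝒢 : ∀ n, Set (Set (Fin n → X))) (P : Set X) : Set X :=
  ⋃ n, ⋃ G ∈ 𝒢 n, ⋃ S : Set (Fin n), ⋃ z ∈ univ.pi fun _ => P,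
    ⋃ _ : IsMeagre (substOn S z ⁻¹' G), substOn S z ⁻¹' G

theorem isMeagre_meagreSections {𝒢 : ∀ n, Set (Set (Fin n → X))} (h𝒢 : ∀ n, (𝒢 n).Countable)
    (hP : P.Countable) : IsMeagre (meagreSections 𝒢 P) :=
  isMeagre_iUnion fun n => isMeagre_biUnion (h𝒢 n) fun _ _ => isMeagre_iUnion fun _ =>
    isMeagre_biUnion (countable_univ_pi fun _ => hP) fun _ _ => isMeagre_iUnion id

theorem exists_isGenericOver [T1Space X] [PerfectSpace X] [BaireSpace X] [Preorder W]
    [WellFoundedLT W] (hW : ∀ a : W, (Iio a).Countable) (hQ : Q.Countable) (hQne : Q.Nonempty)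
    (hF : ∀ n, ∃ F : W → {G : Set (Fin n → X) // IsGδ G}, F.Surjective) :
    ∃ x : W → X, IsGenericOver Q x := by
  choose F hF using hF
  obtain ⟨q, hq⟩ := hQne
  let bad (a : W) (P : Set X) : Set X :=
    (Q ∪ P) ∪ meagreSections (fun n => (fun b => (F n b).1) '' Iio a) (Q ∪ P)
  have exists_notMem_bad (a : W) (P : Set X) (hP : P.Countable) : ∃ t, t ∉ bad a P := by
    have hbad : IsMeagre (bad a P) := (isMeagre_of_countable (hQ.union hP)).union
      (isMeagre_meagreSections (fun _ => (hW a).image _) (hQ.union hP))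
    have : Nonempty X := ⟨q⟩
    exact (dense_of_mem_residual hbad).nonempty
  obtain ⟨x, hx⟩ := exists_forall_image_Iio hW exists_notMem_bad
  refine ⟨x, fun a ha => hx a (Or.inl ha), fun n G hG => ?_⟩
  obtain ⟨b, hb⟩ := hF n ⟨G, hG⟩
  refine ⟨b, fun a hba S z hz hmeagre hmem => hx a (Or.inr ?_)⟩
  simp only [meagreSections, mem_iUnion]
  refine ⟨n, G, ⟨b, hba, congrArg Subtype.val hb⟩, S, substOn S z q, fun i _ => ?_, ?_⟩
  · by_cases hi : i ∈ S
    · rw [substOn_apply_of_mem hi]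
      exact Or.inl hq
    · rw [substOn_apply_of_notMem hi]
      exact hz i hi
  · rw [substOn_substOn]
    exact ⟨hmeagre, hmem⟩

namespace IsGenericOver

variable [LinearOrder W]

theorem injective (hx : IsGenericOver Q x) : x.Injective :=
  .of_lt_imp_ne fun a b hab h => hx.notMem b (Or.inr ⟨a, hab, h⟩)

theorem countable_range_inter (hx : IsGenericOver Q x) (hW : ∀ a : W, (Iic a).Countable)
    {M : Set X} (hM : IsGδ M) (hMm : IsMeagre M) : (range x ∩ M).Countable := by
  obtain ⟨b, hb⟩ := hx.exists_forall_notMem 1 _ (hM.preimage (continuous_apply 0))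
  refine ((hW b).image x).mono ?_
  rintro _ ⟨⟨a, rfl⟩, ha⟩
  have hsubst : (fun t : X => substOn univ (fun _ : Fin 1 => x a) t 0) = id :=
    funext fun t => substOn_apply_of_mem (mem_univ 0) _ t
  refine ⟨a, not_lt.1 fun hba => hb a hba univ (fun _ => x a) (by simp) ?_ ?_, rfl⟩
  · rwa [← preimage_comp, Function.comp_def, hsubst]
  · simpa [substOn] using ha

theorem isConcentratedOn [PerfectlyNormalSpace X] (hx : IsGenericOver Q x)
    (hW : ∀ a : W, (Iic a).Countable) (hQ : Dense Q) : IsConcentratedOn (Q ∪ range x) Q := by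
  intro U hU hQU
  have hUm : IsMeagre Uᶜ := by
    rw [IsMeagre, compl_compl]
    exact residual_of_dense_open hU (hQ.mono hQU)
  refine (hx.countable_range_inter hW hU.isClosed_compl.isGδ hUm).mono ?_
  rintro y ⟨hy, hyU⟩
  exact ⟨hy.resolve_left fun hyQ => hyU (hQU hyQ), hyU⟩

theorem exists_mem_range_forall_mem_image_Iic (hx : IsGenericOver Q x) {ι : Type*} [Finite ι]
    {z : ι → X} (hz : ∀ i, z i ∈ Q ∪ range x) {k : ι} (hk : z k ∉ Q) :
    ∃ a, x a ∈ range z ∧ ∀ i, z i ∈ Q ∪ x '' Iic a := by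
  obtain ⟨c, hc⟩ := (hz k).resolve_left hk
  obtain ⟨a, ha, hmax⟩ := exists_max_image (x ⁻¹' range z) id
    ((finite_range z).preimage hx.injective.injOn) ⟨c, k, hc.symm⟩
  refine ⟨a, ha, fun i => (hz i).imp_right ?_⟩
  rintro ⟨d, hd⟩
  exact ⟨d, hmax d ⟨i, hd.symm⟩, hd⟩

variable [T1Space X] [PerfectSpace X] [SecondCountableTopology X] {n : ℕ} {k : Fin n}

theorem exists_forall_mem_image_Iic_or_exists_denseSections (hx : IsGenericOver Q x)
    {q : X} (hq : q ∈ Q) {V : ℕ → Set (Fin n → X)} (hV : ∀ m, IsOpen (V m))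
    (hk : DeterminesCoord (⋂ m, V m) k) :
    ∃ b, ∀ z ∈ (⋂ m, V m) ∩ separatedPoints (Q ∪ range x) Q k, z k ∈ x '' Iic b ∨
      ∃ S, k ∉ S ∧ ∃ I ∈ countableBasis X,
        ∃ w ∈ denseSections V I S ∩ separatedPoints (Q ∪ range x) Q k,
          w k = z k ∧ {i | w i ∉ Q}.ncard < {i | z i ∉ Q}.ncard := by
  obtain ⟨b, hb⟩ := hx.exists_forall_notMem n _ (.iInter_of_isOpen hV)
  refine ⟨b, fun z ⟨hzV, hzsep⟩ => ?_⟩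
  obtain ⟨hzE, hkQ, hne⟩ := hzsep
  obtain ⟨a, ⟨j, hj⟩, ha⟩ := hx.exists_mem_range_forall_mem_image_Iic hzE hkQ
  rcases le_or_gt a b with hab | hba
  · exact Or.inl (image_mono (Iic_subset_Iic.2 hab) ((ha k).resolve_left hkQ))
  let S : Set (Fin n) := {i | z i = x a}
  have hS : ∀ i ∉ S, z i ∈ Q ∪ x '' Iio a := fun i hi => (ha i).imp_right fun ⟨d, hd, hdi⟩ =>
    ⟨d, hd.lt_of_ne fun hda => hi (hdi.symm.trans (congrArg x hda)), hdi⟩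
  have hsection : ¬IsMeagre (substOn S z ⁻¹' ⋂ m, V m) := fun hm =>
    hb a hba S z hS hm (by rwa [substOn_eq_self fun i (hi : i ∈ S) => hi])
  have hkS : k ∉ S := by
    intro hkS
    have hSk : S = {k} := ext fun i =>
      ⟨fun hi => hne i (hi.trans hkS.symm), fun hi => mem_singleton_iff.1 hi ▸ hkS⟩
    rw [hSk] at hsection
    exact hsection (isMeagre_of_countable (hk.subsingleton_preimage_substOn z).countable)
  obtain ⟨I, hI, hzI⟩ := exists_mem_denseSections hsection
  have hjQ : z j ∉ Q := fun h => hx.notMem a (Or.inl (hj ▸ h))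
  exact Or.inr ⟨S, hkS, I, hI, substOn S z q, ⟨substOn_mem_denseSections.2 hzI,
    substOn_mem_separatedPoints ⟨hzE, hkQ, hne⟩ (Or.inl hq) hq hkS⟩,
    substOn_apply_of_notMem hkS z q, ncard_substOn_notMem_lt hq hj hjQ⟩

variable [BaireSpace X]

theorem countable_image_separatedPoints_of_ncard_lt (hx : IsGenericOver Q x)
    (hW : ∀ a : W, (Iic a).Countable) (hQ : Q.Nonempty) (d : ℕ) {G : Set (Fin n → X)}
    (hG : IsGδ G) (hk : DeterminesCoord G k) :
    ((· k) '' {z ∈ G ∩ separatedPoints (Q ∪ range x) Q k | {i | z i ∉ Q}.ncard < d}).Countable := by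
  induction d generalizing G with
  | zero => simp
  | succ d ih =>
    obtain ⟨q, hq⟩ := hQ
    obtain ⟨V, hV, rfl⟩ := hG.eq_iInter_nat
    obtain ⟨b, hb⟩ := hx.exists_forall_mem_image_Iic_or_exists_denseSections hq hV hk
    have hcount (S : Set (Fin n)) (hS : k ∉ S) (I : Set X) (hI : I ∈ countableBasis X) :=
      ih (isGδ_denseSections hV I S) (hk.denseSections hV (isOpen_of_mem_countableBasis hI)
        (nonempty_of_mem_countableBasis hI) hS)
    refine (((hW b).image x).union (countable_iUnion fun S => countable_iUnion fun hS =>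
      (countable_countableBasis X).biUnion (hcount S hS))).mono ?_
    rintro _ ⟨z, ⟨hz, hzd⟩, rfl⟩
    refine (hb z hz).imp_right fun ⟨S, hS, I, hI, w, hw, hwk, hwd⟩ => ?_
    simp only [mem_iUnion]
    exact ⟨S, hS, I, hI, w, ⟨hw, by omega⟩, hwk⟩

theorem countable_image_separatedPoints (hx : IsGenericOver Q x)
    (hW : ∀ a : W, (Iic a).Countable) (hQ : Q.Nonempty) {G : Set (Fin n → X)} (hG : IsGδ G)
    (hk : DeterminesCoord G k) :
    ((· k) '' (G ∩ separatedPoints (Q ∪ range x) Q k)).Countable := by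
  refine (hx.countable_image_separatedPoints_of_ncard_lt hW hQ (n + 1) hG hk).mono ?_
  refine image_mono fun z hz => ⟨hz, Nat.lt_succ_of_le ?_⟩
  simpa using ncard_le_card {i | z i ∉ Q}

end IsGenericOver

theorem IsGenericOver.countable_image_of_continuousOn [MetrizableSpace X]
    [SecondCountableTopology X] [BaireSpace X] [PerfectSpace X] [LinearOrder W]
    (hx : IsGenericOver Q x) (hW : ∀ a : W, (Iic a).Countable) (hQ : Q.Countable)
    (hQne : Q.Nonempty) {n : ℕ} {A : Set (Fin n → X)} (hA : ∀ z ∈ A, ∀ i, z i ∈ Q ∪ range x)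
    {f : (Fin n → X) → X} (hf : ContinuousOn f A) (hfA : MapsTo f A (Q ∪ range x))
    (hne : ∀ z ∈ A, ∀ i, f z ≠ z i) : (f '' A).Countable := by
  obtain ⟨R, hR, hRinj, hfR⟩ := exists_isGδ_injOn_fst_graphOn_subset hf
  have hcont : Continuous fun v : Fin (n + 1) → X => (Fin.tail v, v 0) := by
    unfold Fin.tail
    fun_prop
  refine (hQ.union (hx.countable_image_separatedPoints hW hQne (hR.preimage hcont)
    (determinesCoord_zero_of_injOn_fst hRinj))).mono ?_
  rintro _ ⟨z, hz, rfl⟩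
  by_cases hfzQ : f z ∈ Q
  · exact Or.inl hfzQ
  refine Or.inr ⟨Fin.cons (f z) z, ⟨?_, ?_, hfzQ, ?_⟩, rfl⟩
  · simpa using hfR ⟨z, hz, rfl⟩
  · exact Fin.cases (hfA hz) (hA z hz)
  · exact Fin.cases (fun _ => rfl) fun i hi => absurd hi.symm (hne z hz i)

end GenericSequence

section Cardinality

open Cardinal

theorem mk_isGδ_le_continuum (Y : Type u) [TopologicalSpace Y] [SecondCountableTopology Y] :
    #{G : Set Y // IsGδ G} ≤ 𝔠 := by
  borelize Y
  refine (mk_le_mk_of_subset fun G (hG : IsGδ G) => ?_).trans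
    (MeasurableSpace.cardinal_measurableSet_le_continuum (s := countableBasis Y)
      ((countable_countableBasis Y).le_aleph0.trans aleph0_le_continuum))
  have hG' := hG.measurableSet
  rwa [BorelSpace.measurable_eq (α := Y), (isBasis_countableBasis Y).borel_eq_generateFrom] at hG'

theorem exists_wellOrder_countable_Iic_and_mk_eq_aleph_one :
    ∃ (W : Type u) (_ : LinearOrder W) (_ : WellFoundedLT W),
      (∀ a : W, (Iic a).Countable) ∧ #W = ℵ₁ := by
  refine ⟨(ℵ₁ : Cardinal.{u}).ord.ToType, inferInstance, inferInstance, fun a => ?_,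
    mk_ord_toType _⟩
  have hIio : (Iio a).Countable := by
    rw [← le_aleph0_iff_set_countable, ← lt_aleph_one_iff]
    simpa using mk_Iio_lt a (by simp)
  exact Iio_insert (a := a) ▸ hIio.insert a

theorem exists_surjective_isGδ (hCH : ContinuumHypothesis) {W : Type u} (hW : #W = ℵ₁)
    (Y : Type u) [TopologicalSpace Y] [SecondCountableTopology Y] :
    ∃ F : W → {G : Set Y // IsGδ G}, F.Surjective := by
  have hCHu : (𝔠 : Cardinal.{u}) = ℵ₁ := by simpa using congrArg Cardinal.lift.{u} hCH
  obtain ⟨g⟩ : #{G : Set Y // IsGδ G} ≤ #W := by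
    rw [hW, ← hCHu]
    exact mk_isGδ_le_continuum Y
  have : Nonempty {G : Set Y // IsGδ G} := ⟨univ, .univ⟩
  exact ⟨Function.invFun g, Function.invFun_surjective g.injective⟩

end Cardinality

theorem stmt8_general (hCH : ContinuumHypothesis) {X : Type u} [TopologicalSpace X]
    [MetrizableSpace X] [SecondCountableTopology X] [BaireSpace X] [PerfectSpace X] [Nonempty X]
    {Q : Set X} (hQ : Q.Countable) (hQd : Dense Q) :
    ∃ E : Set X, ¬E.Countable ∧
      (∀ (n : ℕ) (A : Set (Fin n → X)), (∀ z ∈ A, ∀ i, z i ∈ E) → ∀ f : (Fin n → X) → X,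
        ContinuousOn f A → MapsTo f A E → (∀ z ∈ A, ∀ i, f z ≠ z i) → (f '' A).Countable) ∧
      Q ⊆ E ∧ ¬IsGδ (Subtype.val ⁻¹' Q : Set E) ∧ IsConcentratedOn E Q := by
  obtain ⟨W, _, _, hIic, hW⟩ := exists_wellOrder_countable_Iic_and_mk_eq_aleph_one.{u}
  obtain ⟨x, hx⟩ := exists_isGenericOver (fun a => (hIic a).mono Iio_subset_Iic_self) hQ
    hQd.nonempty fun n => exists_surjective_isGδ hCH hW (Fin n → X)
  have hE : ¬(Q ∪ range x).Countable := fun h => by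
    have hWc : (x ⁻¹' range x).Countable := (h.mono subset_union_right).preimage hx.injective
    have : Countable W := countable_univ_iff.1 (preimage_range x ▸ hWc)
    exact Cardinal.aleph0_lt_aleph_one.not_ge (hW ▸ Cardinal.mk_le_aleph0)
  have hconc := hx.isConcentratedOn hIic hQd
  exact ⟨Q ∪ range x, hE,
    fun n A hA f hf hfA hne =>
      hx.countable_image_of_continuousOn hIic hQ hQd.nonempty hA hf hfA hne,
    subset_union_left, hconc.not_isGδ hQ subset_union_left hE, hconc⟩

/-- Under CH there is an uncountable `E ⊆ ℝ` such that (1) for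
every `n ≥ 1` no uncountable `A ⊆ Eⁿ` admits a one-to-one Euclidean-continuous
`f : A → E` with `f z ∉ {z₁, …, zₙ}` for all `z ∈ A`; and (2) `ℚ ⊆ E`, `ℚ` is
not a relative `Gδ` in `E` (Euclidean subspace topology), and `E` is
concentrated on `ℚ`. -/
theorem stmt8 (hCH : ContinuumHypothesis) :
    ∃ E : Set ℝ, ¬E.Countable ∧
      (∀ n : ℕ, 1 ≤ n → ∀ A : Set (Fin n → ℝ),
        (∀ x ∈ A, ∀ i, x i ∈ E) → ¬A.Countable →
        ¬∃ f : (Fin n → ℝ) → ℝ, Set.InjOn f A ∧ ContinuousOn f A ∧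
          Set.MapsTo f A E ∧ ∀ z ∈ A, ∀ i, f z ≠ z i) ∧
      (Set.range ((↑) : ℚ → ℝ) ⊆ E ∧
        ¬ IsGδ (Subtype.val ⁻¹' Set.range ((↑) : ℚ → ℝ) : Set E) ∧
        ∀ U : Set ℝ, IsOpen U → Set.range ((↑) : ℚ → ℝ) ⊆ U →
          (E \ U).Countable) := by
  obtain ⟨E, hE, hcount, hQ⟩ :=
    stmt8_general hCH (countable_range ((↑) : ℚ → ℝ)) Rat.isDenseEmbedding_coe_real.dense
  exact ⟨E, hE, fun n _ A hAE hA ⟨f, hinj, hf, hfA, hne⟩ => hA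
    (countable_of_injective_of_countable_image hinj (hcount n A hAE f hf hfA hne)), hQ⟩
end

section
/- If E ⊆ ℝ is 2-entangled, then every strictly decreasing function f : A → E with A ⊆ E has countable domain A. -/
/-! A strictly decreasing map has at most one fixed point. Since `ℝ` is second countable and
Hausdorff, the remaining points of `A` are covered by countably many sets `B` for which `B` and
`f '' B` lie in disjoint open sets. If such a `B` were uncountable, the pairs `(a, f a)` with
`a ∈ B` would be pairwise disjoint, and 2-entangledness would give `a < b` with `f a < f b`. -/

open Set Function Cardinal

theorem PairwiseDisjointTuples.mono {n : ℕ} {A B : Set (Fin n → ℝ)}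
    (hB : PairwiseDisjointTuples B) (hAB : A ⊆ B) : PairwiseDisjointTuples A :=
  fun x hx y hy => hB x (hAB hx) y (hAB hy)

theorem pairwiseDisjointTuples_image {α : Type*} {n : ℕ} {g : Fin n → α → ℝ} {A : Set α}
    (hinj : ∀ i, InjOn (g i) A) (hdisj : Pairwise (Disjoint on fun i => g i '' A)) :
    PairwiseDisjointTuples ((fun a i => g i a) '' A) := by
  rintro _ ⟨a, ha, rfl⟩ _ ⟨b, hb, rfl⟩ hne i j
  obtain rfl | hij := eq_or_ne i j
  · exact fun hab => hne (by rw [hinj i ha hb hab])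
  · exact (hdisj hij).ne_of_mem (mem_image_of_mem _ ha) (mem_image_of_mem _ hb)

namespace NEntangled

theorem exists_lt_iff_of_not_countable {L : Set ℝ} {n : ℕ} (hL : NEntangled L n)
    {A : Set (Fin n → ℝ)} (hAL : ∀ x ∈ A, ∀ i, x i ∈ L) (hinj : ∀ x ∈ A, Injective x)
    (hdisj : PairwiseDisjointTuples A) (hA : ¬ A.Countable) (s : Fin n → Fin 2) :
    ∃ x ∈ A, ∃ y ∈ A, x ≠ y ∧ ∀ i, (x i < y i ↔ s i = 0) := by
  have aleph_one_le : ℵ₁ ≤ #A := by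
    rwa [← succ_aleph0, Order.succ_le_iff, ← not_le, le_aleph0_iff_set_countable]
  obtain ⟨B, hBA, hB⟩ := le_mk_iff_exists_subset.1 aleph_one_le
  obtain ⟨x, hx, y, hy, hxy⟩ := hL B (fun x hx => hAL x (hBA hx)) (fun x hx => hinj x (hBA hx))
    (hdisj.mono hBA) hB s
  exact ⟨x, hBA hx, y, hBA hy, hxy⟩

theorem exists_lt_iff_of_injOn {α : Type*} {L : Set ℝ} {n : ℕ} [NeZero n] (hL : NEntangled L n)
    {A : Set α} (hA : ¬ A.Countable) {g : Fin n → α → ℝ} (hgL : ∀ i, MapsTo (g i) A L)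
    (hinj : ∀ i, InjOn (g i) A) (hdisj : Pairwise (Disjoint on fun i => g i '' A))
    (s : Fin n → Fin 2) :
    ∃ a ∈ A, ∃ b ∈ A, a ≠ b ∧ ∀ i, (g i a < g i b ↔ s i = 0) := by
  have tuple_injOn : InjOn (fun a i => g i a) A :=
    fun a ha b hb hab => hinj 0 ha hb (congrFun hab 0)
  have tuple_injective : ∀ x ∈ (fun a i => g i a) '' A, Injective x := by
    rintro _ ⟨a, ha, rfl⟩ i j hij
    by_contra hne
    exact (hdisj hne).ne_of_mem (mem_image_of_mem _ ha) (mem_image_of_mem _ ha) hij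
  obtain ⟨_, ⟨a, ha, rfl⟩, _, ⟨b, hb, rfl⟩, hab, hs⟩ :=
    hL.exists_lt_iff_of_not_countable (forall_mem_image.2 fun a ha i => hgL i ha)
      tuple_injective (pairwiseDisjointTuples_image hinj hdisj)
      (fun h => hA (countable_of_injective_of_countable_image tuple_injOn h)) s
  exact ⟨a, ha, b, hb, ne_of_apply_ne (fun a i => g i a) hab, hs⟩

theorem countable_of_strictAntiOn_of_disjoint_image {E A : Set ℝ} (hE : NEntangled E 2)
    (hAE : A ⊆ E) {f : ℝ → ℝ} (hf : StrictAntiOn f A) (hfE : MapsTo f A E)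
    (hdisj : Disjoint A (f '' A)) : A.Countable := by
  by_contra hA
  obtain ⟨a, ha, b, hb, -, hlt⟩ := hE.exists_lt_iff_of_injOn hA (g := ![id, f])
    (Fin.forall_fin_two.2 ⟨hAE, hfE⟩) (Fin.forall_fin_two.2 ⟨injOn_id A, hf.injOn⟩)
    (by simpa [Pairwise, Fin.forall_fin_two, onFun] using ⟨hdisj, hdisj.symm⟩) 0
  have hab : a < b := (hlt 0).2 rfl
  have hfab : f a < f b := (hlt 1).2 rfl
  exact hfab.asymm (hf ha hb hab)

end NEntangled

theorem subsingleton_inter_fixedPoints_of_antitoneOn {α : Type*} [LinearOrder α] {f : α → α}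
    {A : Set α} (hf : AntitoneOn f A) : (A ∩ fixedPoints f).Subsingleton := by
  rintro a ⟨ha, hfa⟩ b ⟨hb, hfb⟩
  wlog hab : a ≤ b generalizing a b
  · exact (this hb hfb ha hfa (le_of_not_ge hab)).symm
  · have hba : f b ≤ f a := hf ha hb hab
    exact hab.antisymm (by rwa [hfa, hfb] at hba)

theorem countable_sdiff_fixedPoints_of_forall_disjoint_image {α : Type*} [TopologicalSpace α]
    [T2Space α] [SecondCountableTopology α] {f : α → α} {A : Set α}
    (hdisj : ∀ B ⊆ A, Disjoint B (f '' B) → B.Countable) : (A \ fixedPoints f).Countable := by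
  have hgraph : (A ∩ (fun a => (a, f a)) ⁻¹' (diagonal α)ᶜ).Countable := by
    refine (HereditarilyLindelofSpace.isLindelof (diagonal α)ᶜ).induction_on
      (p := fun W => (A ∩ (fun a => (a, f a)) ⁻¹' W).Countable) ?_ ?_ ?_
    · exact fun V W hVW hW => hW.mono (inter_subset_inter_right A (preimage_mono hVW))
    · intro S hS hcount
      rw [preimage_sUnion, inter_iUnion₂]
      exact hS.biUnion hcount
    · rintro ⟨x, y⟩ hxy
      obtain ⟨U, V, hU, hV, hxU, hyV, hUV⟩ := t2_separation hxy
      refine ⟨U ×ˢ V, mem_nhdsWithin_of_mem_nhds ((hU.prod hV).mem_nhds ⟨hxU, hyV⟩),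
        hdisj _ inter_subset_left (hUV.mono (fun a ha => ha.2.1) ?_)⟩
      exact image_subset_iff.2 fun a ha => ha.2.2
  refine hgraph.mono ?_
  rintro a ⟨ha, hfa⟩
  exact ⟨ha, fun h => hfa h.symm⟩

/-- If `E` is 2-entangled then every strictly decreasing function
from a subset `A ⊆ E` into `E` has countable domain. -/
theorem stmt9 (E : Set ℝ) (hE : NEntangled E 2) (A : Set ℝ) (hA : A ⊆ E)
    (f : ℝ → ℝ) (hf : StrictAntiOn f A) (hmap : Set.MapsTo f A E) :
    A.Countable := by
  have hfixed : (A ∩ fixedPoints f).Countable :=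
    (subsingleton_inter_fixedPoints_of_antitoneOn hf.antitoneOn).countable
  have hmoved : (A \ fixedPoints f).Countable :=
    countable_sdiff_fixedPoints_of_forall_disjoint_image fun B hBA hB =>
      hE.countable_of_strictAntiOn_of_disjoint_image (hBA.trans hA) (hf.mono hBA)
        (hmap.mono_left hBA) hB
  simpa only [inter_union_sdiff] using hfixed.union hmoved
end

section
/- Assume the Continuum Hypothesis. Then there exists an uncountable set E ⊆ ℝ such that: (1) E is not 2-entangled; (2) ℚ ⊆ E and E is concentrated on ℚ; and (3) (E[≤])² is a normal topological space. -/
/-! Under CH a recursion of length `ω₁` produces a set `F` of reals, each new element of which is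
generic over countably many closed antitone relations `C ⊆ ℝ²` and dense open sets, and over the
elements chosen before. Only countably many horizontal and vertical sections of `C` have more than
one point, and a generic real avoids any set with at most one point; hence every antitone relation
on `F` lies on countably many horizontal and vertical lines. This property and being a Luzin set
both survive countable unions of translates, so a union `E` of rational translates of `F`, shifted
so as to contain `ℚ`, has both. The Luzin property makes `E` concentrated on `ℚ`, and invariance
under `x ↦ x + 1` prevents `E` from being 2-entangled.

For a cover of `E²` by Sorgenfrey boxes `[a, b) × [c, d)`, countably many of the Euclidean interiors
`(a, b) × (c, d)` cover what all of them cover. The points left over form a countable union of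
antitone relations, so they lie on countably many lines, each of which is Lindelöf. Thus `(E[≤])²`
is regular and Lindelöf, hence normal. -/

open Set Filter Topology TopologicalSpace
open scoped Cardinal

section AntitoneRel

variable {α β γ δ : Type*} [LinearOrder α] [LinearOrder β] [LinearOrder γ] [LinearOrder δ]

/-- A relation `C ⊆ α × β` is antitone if no two of its points increase strictly in both
coordinates. This is the notion of a nonincreasing curve, vertical segments being allowed. -/
def IsAntitoneRel (C : Set (α × β)) : Prop :=
  ∀ ⦃p⦄, p ∈ C → ∀ ⦃q⦄, q ∈ C → p.1 < q.1 → q.2 ≤ p.2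

namespace IsAntitoneRel

lemma mono {C D : Set (α × β)} (hD : IsAntitoneRel D) (h : C ⊆ D) : IsAntitoneRel C :=
  fun _ hp _ hq => hD (h hp) (h hq)

lemma preimage_prodMap {C : Set (γ × δ)} (hC : IsAntitoneRel C) {f : α → γ} {g : β → δ}
    (hf : StrictMono f) (hg : StrictMono g) : IsAntitoneRel (Prod.map f g ⁻¹' C) :=
  fun _ hp _ hq hlt => hg.le_iff_le.1 (hC hp hq (hf hlt))

lemma preimage_swap {C : Set (α × β)} (hC : IsAntitoneRel C) : IsAntitoneRel (Prod.swap ⁻¹' C) :=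
  fun _ hp _ hq hlt => le_of_not_gt fun hlt' => (hC hp hq hlt').not_gt hlt

lemma closure [TopologicalSpace α] [OrderClosedTopology α] [TopologicalSpace β]
    [OrderClosedTopology β] {C : Set (α × β)} (hC : IsAntitoneRel C) :
    IsAntitoneRel (closure C) := by
  have hclosed : IsClosed {r : (α × β) × (α × β) | r.2.1 ≤ r.1.1 ∨ r.2.2 ≤ r.1.2} :=
    (isClosed_le (by fun_prop) (by fun_prop)).union (isClosed_le (by fun_prop) (by fun_prop))
  have hsub : _root_.closure (C ×ˢ C) ⊆ {r | r.2.1 ≤ r.1.1 ∨ r.2.2 ≤ r.1.2} :=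
    closure_minimal (fun r hr => (le_or_gt r.2.1 r.1.1).imp_right (hC hr.1 hr.2)) hclosed
  rw [closure_prod_eq] at hsub
  exact fun p hp q hq hlt => (hsub (mk_mem_prod hp hq)).resolve_left hlt.not_ge

lemma subsingleton_diagonal {C : Set (α × α)} (hC : IsAntitoneRel C) :
    {x | (x, x) ∈ C}.Subsingleton := by
  have hle : ∀ x, (x, x) ∈ C → ∀ y, (y, y) ∈ C → y ≤ x := fun x hx y hy =>
    le_of_not_gt fun hlt => (hC hx hy hlt).not_gt hlt
  exact fun x hx y hy => (hle y hy x hx).antisymm (hle x hx y hy)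

lemma countable_nontrivial_horizontal_section [TopologicalSpace α] [OrderClosedTopology α]
    [SeparableSpace α] [DenselyOrdered α] {C : Set (α × β)} (hC : IsAntitoneRel C) :
    {y | {x | (x, y) ∈ C}.Nontrivial}.Countable := by
  have hlt : ∀ y : {y | {x | (x, y) ∈ C}.Nontrivial}, ∃ a b, (a, y.1) ∈ C ∧ (b, y.1) ∈ C ∧ a < b :=
    fun y => let ⟨a, ha, b, hb, hab⟩ := y.2.exists_lt; ⟨a, b, ha, hb, hab⟩
  choose a b ha hb hab using hlt
  have hdisj : ∀ y z, y < z → Disjoint (Ioo (a y) (b y)) (Ioo (a z) (b z)) := fun y z hyz =>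
    have hle : b z ≤ a y := le_of_not_gt fun hlt => (hC (ha y) (hb z) hlt).not_gt hyz
    Ioo_disjoint_Ioo.2 ((min_le_right _ _).trans (hle.trans (le_max_left _ _)))
  have hpairwise : univ.PairwiseDisjoint fun y => Ioo (a y) (b y) := fun y _ z _ hne =>
    hne.lt_or_gt.elim (hdisj y z) fun hzy => (hdisj z y hzy).symm
  exact countable_coe_iff.1 <| countable_univ_iff.1 <| hpairwise.countable_of_isOpen
    (fun _ _ => isOpen_Ioo) fun y _ => nonempty_Ioo.2 (hab y)

end IsAntitoneRel

end AntitoneRel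

section AntitoneThin

variable {α β : Type*} [LinearOrder α] [LinearOrder β]

/-- `E` is antitone-thin if every antitone relation on `E` lies on countably many horizontal and
vertical lines. It is the combinatorial property of `E` from which the Sorgenfrey square of `E` is
shown to be Lindelöf. -/
def AntitoneThin (E : Set α) : Prop :=
  ∀ A ⊆ E ×ˢ E, IsAntitoneRel A → ∃ Z : Set α, Z.Countable ∧ ∀ p ∈ A, p.1 ∈ Z ∨ p.2 ∈ Z

lemma AntitoneThin.iUnion_image {ι : Type*} [Countable ι] {F : Set α} (hF : AntitoneThin F)
    {f : ι → α → β} (hf : ∀ i, StrictMono (f i)) : AntitoneThin (⋃ i, f i '' F) := by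
  intro A hAE hA
  have hpull (i j) : ∃ Z : Set α, Z.Countable ∧
      ∀ p ∈ Prod.map (f i) (f j) ⁻¹' A ∩ F ×ˢ F, p.1 ∈ Z ∨ p.2 ∈ Z :=
    hF _ inter_subset_right ((hA.preimage_prodMap (hf i) (hf j)).mono inter_subset_left)
  choose Z hZc hZ using hpull
  refine ⟨⋃ i, ⋃ j, f i '' Z i j ∪ f j '' Z i j,
    countable_iUnion fun i => countable_iUnion fun j =>
      ((hZc i j).image _).union ((hZc i j).image _), fun p hp => ?_⟩
  obtain ⟨i, x, hx, hxp⟩ := mem_iUnion.1 (hAE hp).1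
  obtain ⟨j, y, hy, hyp⟩ := mem_iUnion.1 (hAE hp).2
  have hxyA : Prod.map (f i) (f j) (x, y) ∈ A := by
    rwa [Prod.map_apply, hxp, hyp]
  simp only [mem_iUnion]
  rcases hZ i j (x, y) ⟨hxyA, hx, hy⟩ with hxZ | hyZ
  · exact .inl ⟨i, j, .inl ⟨x, hxZ, hxp⟩⟩
  · exact .inr ⟨i, j, .inr ⟨y, hyZ, hyp⟩⟩

end AntitoneThin

section Luzin

variable {X Y : Type*} [TopologicalSpace X] [TopologicalSpace Y]

/-- `F` is a Luzin set if it has only countably many points in each nowhere dense set or,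
equivalently, outside each dense open set. In contrast to some authors, we do not require `F` to be
uncountable. -/
def IsLuzin (F : Set X) : Prop :=
  ∀ U : Set X, IsOpen U → Dense U → (F \ U).Countable

lemma IsLuzin.iUnion_image {ι : Type*} [Countable ι] {F : Set X} (hF : IsLuzin F) {f : ι → X → Y}
    (hcont : ∀ i, Continuous (f i)) (hopen : ∀ i, IsOpenMap (f i)) :
    IsLuzin (⋃ i, f i '' F) := by
  intro U hU hUd
  refine (countable_iUnion fun i => (hF (f i ⁻¹' U) (hU.preimage (hcont i))
    (hUd.preimage (hopen i))).image (f i)).mono ?_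
  rintro _ ⟨hy, hyU⟩
  obtain ⟨i, x, hx, rfl⟩ := mem_iUnion.1 hy
  exact mem_iUnion.2 ⟨i, x, ⟨hx, hyU⟩, rfl⟩

end Luzin

section GenericSequence

variable {X : Type*} [TopologicalSpace X]

lemma eventually_residual_notMem_of_subsingleton [T1Space X] [∀ x : X, (𝓝[≠] x).NeBot] {s : Set X}
    (hs : s.Subsingleton) : ∀ᶠ x in residual X, x ∉ s := by
  obtain rfl | ⟨a, rfl⟩ := hs.eq_empty_or_singleton
  · exact .of_forall fun _ => id
  · exact residual_of_dense_open isOpen_compl_singleton (dense_compl_singleton a)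

theorem exists_generic_sequence [T1Space X] [∀ x : X, (𝓝[≠] x).NeBot] [BaireSpace X] [Nonempty X]
    {ι T : Type*} [LinearOrder ι] [WellFoundedLT ι] (hι : ∀ a : ι, (Iio a).Countable)
    {rank : T → ι} (hrank : Function.Injective rank) {P : T → X → X → Prop}
    (hP : ∀ t z, ∀ᶠ x in residual X, P t z x) :
    ∃ x : ι → X, Function.Injective x ∧ ∀ t, ∀ a > rank t, ∀ c < a, P t (x c) (x a) := by
  have hstep : ∀ (a : ι) (f : ∀ c, c < a → X), ∃ y, ∀ c (hc : c < a),
      y ≠ f c hc ∧ ∀ t, rank t < a → P t (f c hc) y := by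
    intro a f
    have : Countable (Iio a) := (hι a).to_subtype
    have : Countable {t | rank t < a} := ((hι a).preimage_of_injOn hrank.injOn).to_subtype
    have hev : ∀ᶠ y in residual X, ∀ c : Iio a,
        y ≠ f c c.2 ∧ ∀ t : {t | rank t < a}, P t (f c c.2) y :=
      eventually_countable_forall.2 fun c =>
        (eventually_residual_notMem_of_subsingleton subsingleton_singleton).and
          (eventually_countable_forall.2 fun t => hP t _)
    obtain ⟨y, hy⟩ := (dense_of_mem_residual hev).nonempty
    exact ⟨y, fun c hc => ⟨(hy ⟨c, hc⟩).1, fun t ht => (hy ⟨c, hc⟩).2 ⟨t, ht⟩⟩⟩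
  choose next hnext using hstep
  have hwf : WellFounded (fun a b : ι => a < b) := wellFounded_lt
  have hx : ∀ a, ∀ c < a, hwf.fix next a ≠ hwf.fix next c ∧
      ∀ t, rank t < a → P t (hwf.fix next c) (hwf.fix next a) := by
    intro a c hc
    rw [hwf.fix_eq next a]
    exact hnext a (fun c _ => hwf.fix next c) c hc
  refine ⟨hwf.fix next, fun a c hac => ?_, fun t a ha c hc => (hx a c hc).2 t ha⟩
  by_contra hne
  rcases lt_or_gt_of_ne hne with h | h
  · exact (hx c a h).1 hac.symm
  · exact (hx a c h).1 hac

lemma isLuzin_range_of_forall_exists_gt_mem {ι : Type*} [LinearOrder ι]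
    (hι : ∀ a : ι, (Iic a).Countable) {x : ι → X}
    (hx : ∀ U : Set X, IsOpen U → Dense U → ∃ b, ∀ a > b, x a ∈ U) : IsLuzin (range x) := by
  intro U hU hUd
  obtain ⟨b, hb⟩ := hx U hU hUd
  refine ((hι b).image x).mono ?_
  rintro _ ⟨⟨a, rfl⟩, haU⟩
  exact ⟨a, not_lt.1 fun hba => haU (hb a hba), rfl⟩

end GenericSequence

section Avoidance

variable {α : Type*}

/-- `x` is generic over the relation `C` and the point `z` if it avoids the diagonal section of `C`
and those of the two sections of `C` through `z` that have at most one point. The first clause is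
unconditional because the diagonal section of an antitone relation has at most one point. -/
def IsGenericOver_s12 (C : Set (α × α)) (z x : α) : Prop :=
  (x, x) ∉ C ∧ ({u | (u, z) ∈ C}.Subsingleton → (x, z) ∉ C) ∧
    ({u | (z, u) ∈ C}.Subsingleton → (z, x) ∉ C)

variable [LinearOrder α] [TopologicalSpace α] [OrderClosedTopology α]

lemma IsAntitoneRel.eventually_isGenericOver [∀ x : α, (𝓝[≠] x).NeBot] {C : Set (α × α)}
    (hC : IsAntitoneRel C) (z : α) : ∀ᶠ x in residual α, IsGenericOver_s12 C z x :=
  have avoid {s : Set α} : ∀ᶠ x in residual α, s.Subsingleton → x ∉ s :=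
    eventually_imp_distrib_left.2 eventually_residual_notMem_of_subsingleton
  (eventually_residual_notMem_of_subsingleton hC.subsingleton_diagonal).and (avoid.and avoid)

lemma antitoneThin_range_of_forall_exists_isGenericOver [DenselyOrdered α] [SeparableSpace α]
    {ι : Type*} [LinearOrder ι] (hι : ∀ a : ι, (Iic a).Countable) {x : ι → α}
    (hx : ∀ C : Set (α × α), IsClosed C → IsAntitoneRel C →
      ∃ b, ∀ a > b, ∀ c < a, IsGenericOver_s12 C (x c) (x a)) : AntitoneThin (range x) := by
  intro A hAx hA
  obtain ⟨b, hb⟩ := hx (closure A) isClosed_closure hA.closure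
  refine ⟨x '' Iic b ∪ ({y | {u | (u, y) ∈ closure A}.Nontrivial} ∪
      {y | {u | (y, u) ∈ closure A}.Nontrivial}),
    ((hι b).image x).union (hA.closure.countable_nontrivial_horizontal_section.union
      hA.closure.preimage_swap.countable_nontrivial_horizontal_section), ?_⟩
  rintro ⟨p, q⟩ hpq
  obtain ⟨⟨a, rfl⟩, ⟨c, rfl⟩⟩ := hAx hpq
  have hcl : (x a, x c) ∈ closure A := subset_closure hpq
  by_contra! ⟨ha, hc⟩
  simp only [mem_union, mem_ofPred_eq, not_or, not_nontrivial_iff] at ha hc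
  have hba : b < a := not_le.1 fun h => ha.1 ⟨a, h, rfl⟩
  have hbc : b < c := not_le.1 fun h => hc.1 ⟨c, h, rfl⟩
  rcases lt_trichotomy a c with hac | rfl | hca
  · exact (hb c hbc a hac).2.2 ha.2.2 hcl
  · exact (hb a hba b hba).1 hcl
  · exact (hb a hba c hca).2.1 hc.2.1 hcl

end Avoidance

section Existence

universe u

lemma mk_opens_le_continuum (X : Type u) [TopologicalSpace X] [SecondCountableTopology X] :
    #(Opens X) ≤ 𝔠 := by
  let basicSubsets (U : Opens X) : Set (countableBasis X) := {b | b.1 ⊆ U}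
  have hinj : Function.Injective basicSubsets := by
    have hle : ∀ U V, basicSubsets U = basicSubsets V → (U : Set X) ⊆ V := fun U V h =>
      (isBasis_countableBasis X).subset_of_forall_subset U.isOpen fun b hb hbU =>
        (h.subset hbU : (⟨b, hb⟩ : countableBasis X) ∈ basicSubsets V)
    exact fun U V h => Opens.ext ((hle U V h).antisymm (hle V U h.symm))
  calc #(Opens X) ≤ #(Set (countableBasis X)) := Cardinal.mk_le_of_injective hinj
    _ = 2 ^ #(countableBasis X) := Cardinal.mk_set
    _ ≤ 2 ^ ℵ₀ := Cardinal.power_le_power_left two_ne_zero (countable_countableBasis X).le_aleph0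
    _ = 𝔠 := Cardinal.two_power_aleph0

lemma mk_closeds_le_continuum (X : Type u) [TopologicalSpace X] [SecondCountableTopology X] :
    #(Closeds X) ≤ 𝔠 :=
  (Cardinal.mk_congr (Closeds.complOrderIso X).toEquiv).trans_le (mk_opens_le_continuum X)

variable {α : Type u} [LinearOrder α] [TopologicalSpace α] [OrderClosedTopology α]
  [DenselyOrdered α] [SecondCountableTopology α] [BaireSpace α] [Nonempty α]
  [∀ x : α, (𝓝[≠] x).NeBot]

theorem exists_injective_isLuzin_antitoneThin_range {ι : Type u} [LinearOrder ι] [WellFoundedLT ι]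
    (hι : ∀ a : ι, (Iio a).Countable) (hcard : 𝔠 ≤ #ι) :
    ∃ x : ι → α, Function.Injective x ∧ IsLuzin (range x) ∧ AntitoneThin (range x) := by
  let T := {U : Opens α // Dense (U : Set α)} ×
    {C : Closeds (α × α) // IsAntitoneRel (C : Set (α × α))}
  have hT : #T ≤ #ι := by
    rw [← Cardinal.mul_def]
    calc _ ≤ 𝔠 * 𝔠 := mul_le_mul' ((Cardinal.mk_subtype_le _).trans (mk_opens_le_continuum α))
          ((Cardinal.mk_subtype_le _).trans (mk_closeds_le_continuum _))
      _ = 𝔠 := Cardinal.continuum_mul_self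
      _ ≤ #ι := hcard
  obtain ⟨rank⟩ : Nonempty (T ↪ ι) := hT
  obtain ⟨x, hinj, hx⟩ := exists_generic_sequence (X := α) hι rank.injective
    (P := fun t z x => x ∈ t.1.1 ∧ IsGenericOver_s12 (t.2.1 : Set (α × α)) z x)
    fun t z => .and (residual_of_dense_open t.1.1.isOpen t.1.2)
      (t.2.2.eventually_isGenericOver z)
  have hIic (a : ι) : (Iic a).Countable := Iio_insert (a := a) ▸ (hι a).insert a
  refine ⟨x, hinj, isLuzin_range_of_forall_exists_gt_mem hIic fun U hU hUd => ?_,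
    antitoneThin_range_of_forall_exists_isGenericOver hIic fun C hC hCa => ?_⟩
  · let t : T := (⟨⟨U, hU⟩, hUd⟩, ⟨⊥, by simp [IsAntitoneRel]⟩)
    exact ⟨rank t, fun a ha => (hx t a ha (rank t) ha).1⟩
  · let t : T := (⟨⊤, by simp⟩, ⟨⟨C, hC⟩, hCa⟩)
    exact ⟨rank t, fun a ha c hc => (hx t a ha c hc).2⟩

end Existence

theorem ContinuumHypothesis.exists_uncountable_isLuzin_antitoneThin (hCH : ContinuumHypothesis)
    {α : Type} [LinearOrder α] [TopologicalSpace α] [OrderClosedTopology α]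
    [DenselyOrdered α] [SecondCountableTopology α] [BaireSpace α] [Nonempty α]
    [∀ x : α, (𝓝[≠] x).NeBot] :
    ∃ F : Set α, ¬F.Countable ∧ IsLuzin F ∧ AntitoneThin F := by
  let ι : Type := (ℵ₁ : Cardinal.{0}).ord.ToType
  have hmk : #ι = ℵ₁ := Cardinal.mk_ord_toType _
  have hι (a : ι) : (Iio a).Countable := by
    have hlt : #(Iio a) < #ι :=
      Cardinal.mk_Iio_lt a (by rw [hmk]; exact (Ordinal.type_toType _).symm)
    rw [← Cardinal.le_aleph0_iff_set_countable, ← Cardinal.lt_aleph_one_iff]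
    exact hlt.trans_eq hmk
  obtain ⟨x, hinj, hLuzin, hthin⟩ :=
    exists_injective_isLuzin_antitoneThin_range (α := α) hι (hCH.trans hmk.symm).le
  refine ⟨range x, fun hcount => ?_, hLuzin, hthin⟩
  rw [← Cardinal.le_aleph0_iff_set_countable, Cardinal.mk_range_eq x hinj, hmk] at hcount
  exact hcount.not_gt Cardinal.aleph0_lt_aleph_one

section HalfOpenCovers

variable {ι α : Type*} [LinearOrder α] [TopologicalSpace α] [OrderClosedTopology α]
  [DenselyOrdered α] [SecondCountableTopology α]

lemma exists_countable_subcover_Ico {s u : ι → α} (hs : Function.Injective s)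
    (hu : ∀ i, s i < u i) :
    ∃ T : Set ι, T.Countable ∧ ∀ j, ∃ i ∈ T, s j ∈ Ico (s i) (u i) := by
  obtain ⟨T, hT, hTV⟩ := isOpen_iUnion_countable (fun i => Ioo (s i) (u i)) fun _ => isOpen_Ioo
  let R : Set ι := {j | s j ∉ ⋃ i, Ioo (s i) (u i)}
  have hdisj : ∀ j ∈ R, ∀ k ∈ R, s j < s k → Disjoint (Ioo (s j) (u j)) (Ioo (s k) (u k)) :=
    fun j _ k hk hjk =>
      have hle : u j ≤ s k := not_lt.1 fun hkj => hk (mem_iUnion.2 ⟨j, hjk, hkj⟩)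
      Ioo_disjoint_Ioo.2 ((min_le_left _ _).trans (hle.trans (le_max_right _ _)))
  have hpairwise : R.PairwiseDisjoint fun i => Ioo (s i) (u i) := fun j hj k hk hne =>
    (hs.ne hne).lt_or_gt.elim (hdisj j hj k hk) fun hkj => (hdisj k hk j hj hkj).symm
  have hR : R.Countable :=
    hpairwise.countable_of_isOpen (fun _ _ => isOpen_Ioo) fun i _ => nonempty_Ioo.2 (hu i)
  refine ⟨T ∪ R, hT.union hR, fun j => ?_⟩
  by_cases hj : s j ∈ ⋃ i, Ioo (s i) (u i)
  · rw [← hTV] at hj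
    obtain ⟨i, hi, hji⟩ := mem_iUnion₂.1 hj
    exact ⟨i, .inl hi, Ioo_subset_Ico_self hji⟩
  · exact ⟨j, .inr hj, le_rfl, hu j⟩

lemma AntitoneThin.exists_countable_of_notMem_iUnion_Ioo_prod {E : Set α} (hE : AntitoneThin E)
    {s u : ι → α × α} (hs : ∀ i, s i ∈ E ×ˢ E) (hu : ∀ i, (s i).1 < (u i).1 ∧ (s i).2 < (u i).2) :
    ∃ Z : Set α, Z.Countable ∧
      ∀ j, s j ∉ ⋃ i, Ioo (s i).1 (u i).1 ×ˢ Ioo (s i).2 (u i).2 → (s j).1 ∈ Z ∨ (s j).2 ∈ Z := by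
  set V := ⋃ i, Ioo (s i).1 (u i).1 ×ˢ Ioo (s i).2 (u i).2
  obtain ⟨D, hDc, hD⟩ := exists_countable_dense α
  have := hDc.to_subtype
  let A (d : D × D) : Set (α × α) :=
    s '' {i | s i ∉ V ∧ (d.1 : α) ∈ Ioo (s i).1 (u i).1 ∧ (d.2 : α) ∈ Ioo (s i).2 (u i).2}
  -- If `s i` lay strictly below `s j` in both coordinates then, as `d` lies above `s j` and below
  -- `u i`, the point `s j` would be in the open box of `s i`.
  have hA (d) : IsAntitoneRel (A d) := by
    rintro _ ⟨i, ⟨-, hi₁, hi₂⟩, rfl⟩ _ ⟨j, ⟨hjV, hj₁, hj₂⟩, rfl⟩ h₁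
    by_contra! h₂
    exact hjV (mem_iUnion.2 ⟨i, ⟨h₁, hj₁.1.trans hi₁.2⟩, ⟨h₂, hj₂.1.trans hi₂.2⟩⟩)
  have hAE (d) : A d ⊆ E ×ˢ E := by
    rintro _ ⟨i, -, rfl⟩
    exact hs i
  choose Z hZc hZ using fun d => hE (A d) (hAE d) (hA d)
  refine ⟨⋃ d, Z d, countable_iUnion hZc, fun j hj => ?_⟩
  obtain ⟨d, hdD, hd⟩ := hD.exists_between (hu j).1
  obtain ⟨e, heD, he⟩ := hD.exists_between (hu j).2
  exact (hZ (⟨d, hdD⟩, ⟨e, heD⟩) (s j) ⟨j, ⟨hj, hd, he⟩, rfl⟩).imp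
    (fun h => mem_iUnion.2 ⟨_, h⟩) fun h => mem_iUnion.2 ⟨_, h⟩

end HalfOpenCovers

section Sorgenfrey

lemma hasBasis_nhds_sorgenfrey (x : ℝ) : (@nhds ℝ sorgenfrey x).HasBasis (x < ·) (Ico x) := by
  have hnhds : @nhds ℝ sorgenfrey x = 𝓝[≥] x := by
    rw [sorgenfrey, nhds_generateFrom]
    refine le_antisymm ((nhdsGE_basis_Ico x).ge_iff.2 fun u hu => ?_) (le_iInf₂ ?_)
    · exact mem_iInf_of_mem (Ico x u) (mem_iInf_of_mem ⟨⟨le_rfl, hu⟩, x, u, hu, rfl⟩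
        (mem_principal_self _))
    · rintro _ ⟨hx, a, b, -, rfl⟩
      exact le_principal_iff.2 (Ico_mem_nhdsGE_of_mem hx)
  exact hnhds ▸ nhdsGE_basis_Ico x

lemma isClosed_sorgenfrey_Ico (a b : ℝ) : IsClosed[sorgenfrey] (Ico a b) := by
  let := sorgenfrey
  rw [← isOpen_compl_iff, isOpen_iff_mem_nhds]
  intro y hy
  rw [(hasBasis_nhds_sorgenfrey y).mem_iff]
  rcases lt_or_ge y a with hya | hay
  · exact ⟨a, hya, fun z hz hz' => hz.2.not_ge hz'.1⟩
  · have hby : b ≤ y := not_lt.1 fun hyb => hy ⟨hay, hyb⟩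
    exact ⟨y + 1, lt_add_one y, fun z hz hz' => (hby.trans hz.1).not_gt hz'.2⟩

lemma regularSpace_sorgenfrey : @RegularSpace ℝ sorgenfrey := by
  let := sorgenfrey
  exact .of_hasBasis hasBasis_nhds_sorgenfrey fun a b _ => isClosed_sorgenfrey_Ico a b

variable (E : Set ℝ)

lemma hasBasis_nhds_sorgenfreySub (x : E) :
    (@nhds E (sorgenfreySub E) x).HasBasis (x.1 < ·) fun u => Subtype.val ⁻¹' Ico x.1 u := by
  rw [sorgenfreySub, @nhds_induced _ _ sorgenfrey]
  exact (hasBasis_nhds_sorgenfrey x).comap _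

lemma lindelofSpace_sorgenfreySub : @LindelofSpace E (sorgenfreySub E) := by
  let := sorgenfreySub E
  refine ⟨isLindelof_of_countable_subcover fun U hU hcover => ?_⟩
  choose i hi using fun x => mem_iUnion.1 (hcover (mem_univ x))
  choose u hu huU using fun x =>
    (hasBasis_nhds_sorgenfreySub E x).mem_iff.1 ((hU (i x)).mem_nhds (hi x))
  obtain ⟨T, hT, hcoverT⟩ := exists_countable_subcover_Ico Subtype.val_injective hu
  refine ⟨i '' T, hT.image i, fun y _ => ?_⟩
  obtain ⟨x, hxT, hyx⟩ := hcoverT y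
  exact mem_iUnion₂.2 ⟨i x, mem_image_of_mem i hxT, huU x hyx⟩

lemma regularSpace_sorgenfreySq : @RegularSpace (E × E) (sorgenfreySq E) := by
  let := sorgenfreySub E
  have : RegularSpace E := @regularSpace_induced ℝ E sorgenfrey regularSpace_sorgenfrey Subtype.val
  exact (inferInstance : RegularSpace (E × E))

variable {E}

lemma isLindelof_sorgenfreySq_setOf_mem_or_mem {Z : Set ℝ} (hZ : Z.Countable) :
    @IsLindelof (E × E) (sorgenfreySq E) {p | p.1.1 ∈ Z ∨ p.2.1 ∈ Z} := by
  let := sorgenfreySub E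
  have := lindelofSpace_sorgenfreySub E
  have hlines : {p : E × E | p.1.1 ∈ Z ∨ p.2.1 ∈ Z} =
      ⋃ z ∈ (Subtype.val ⁻¹' Z : Set E), range (Prod.mk z) ∪ range (·, z) := by
    ext ⟨x, y⟩
    simp only [mem_ofPred_eq, mem_iUnion, mem_union, mem_range, mem_preimage, Prod.mk.injEq]
    aesop
  rw [hlines]
  exact (hZ.preimage Subtype.val_injective).isLindelof_biUnion fun z _ =>
    (isLindelof_range (by fun_prop)).union (isLindelof_range (by fun_prop))

theorem AntitoneThin.lindelofSpace_sorgenfreySq (hE : AntitoneThin E) :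
    @LindelofSpace (E × E) (sorgenfreySq E) := by
  let := sorgenfreySub E
  refine ⟨isLindelof_of_countable_subcover fun U hU hcover => ?_⟩
  choose i hi using fun p => mem_iUnion.1 (hcover (mem_univ p))
  choose u hu huU using fun p : E × E =>
    ((hasBasis_nhds_sorgenfreySub E p.1).prod_nhds (hasBasis_nhds_sorgenfreySub E p.2)).mem_iff.1
      ((hU (i p)).mem_nhds (hi p))
  let s : E × E → ℝ × ℝ := Prod.map Subtype.val Subtype.val
  let box (p : E × E) : Set (ℝ × ℝ) := Ioo (s p).1 (u p).1 ×ˢ Ioo (s p).2 (u p).2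
  obtain ⟨T, hT, hTV⟩ := isOpen_iUnion_countable box fun _ => isOpen_Ioo.prod isOpen_Ioo
  obtain ⟨Z, hZ, hRZ⟩ :=
    hE.exists_countable_of_notMem_iUnion_Ioo_prod (s := s) (fun p => ⟨p.1.2, p.2.2⟩) hu
  obtain ⟨T', hT', hcoverZ⟩ := (isLindelof_sorgenfreySq_setOf_mem_or_mem hZ).elim_countable_subcover
    U hU ((subset_univ _).trans hcover)
  refine ⟨i '' T ∪ T', (hT.image i).union hT', fun q _ => ?_⟩
  rw [biUnion_union]
  by_cases hq : s q ∈ ⋃ p, box p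
  · rw [← hTV] at hq
    obtain ⟨p, hpT, hqp⟩ := mem_iUnion₂.1 hq
    exact .inl (mem_iUnion₂.2 ⟨i p, mem_image_of_mem i hpT,
      huU p ⟨Ioo_subset_Ico_self hqp.1, Ioo_subset_Ico_self hqp.2⟩⟩)
  · exact .inr (hcoverZ (hRZ q hq))

theorem AntitoneThin.normalSpace_sorgenfreySq (hE : AntitoneThin E) :
    @NormalSpace (E × E) (sorgenfreySq E) := by
  let := sorgenfreySq E
  have := regularSpace_sorgenfreySq E
  have := hE.lindelofSpace_sorgenfreySq
  exact inferInstance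

end Sorgenfrey

lemma exists_mk_eq_aleph_one_forall_lt_lt {E : Set ℝ} {f : ℝ → ℝ} (hE : ¬E.Countable)
    (hlt : ∀ x ∈ E, x < f x) : ∃ r : ℝ, ∃ B ⊆ E, #B = ℵ₁ ∧ ∀ x ∈ B, x < r ∧ r < f x := by
  obtain ⟨r, hr⟩ : ∃ r : ℚ, ¬{x ∈ E | x < r ∧ r < f x}.Countable := by
    by_contra! hcount
    refine hE ((countable_iUnion hcount).mono fun x hx => ?_)
    obtain ⟨r, hr⟩ := exists_rat_btwn (hlt x hx)
    exact mem_iUnion.2 ⟨r, hx, hr⟩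
  obtain ⟨B, hBr, hB⟩ : ∃ B ⊆ {x ∈ E | x < r ∧ r < f x}, #B = ℵ₁ := by
    rwa [← Cardinal.le_mk_iff_exists_subset, ← not_lt, Cardinal.lt_aleph_one_iff,
      Cardinal.le_aleph0_iff_set_countable]
  exact ⟨r, B, fun x hx => (hBr hx).1, hB, fun x hx => (hBr hx).2⟩

lemma not_nEntangled_two_of_strictMonoOn {E : Set ℝ} {f : ℝ → ℝ} (hE : ¬E.Countable)
    (hf : StrictMonoOn f E) (hmaps : MapsTo f E E) (hlt : ∀ x ∈ E, x < f x) :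
    ¬NEntangled E 2 := by
  obtain ⟨r, B, hBE, hB, hr⟩ := exists_mk_eq_aleph_one_forall_lt_lt hE hlt
  let pair (x : ℝ) : Fin 2 → ℝ := ![x, f x]
  have hpair : Function.Injective pair := fun x y hxy => congrFun hxy 0
  have hpairE : ∀ p ∈ pair '' B, ∀ i, p i ∈ E := by
    rintro _ ⟨x, hx, rfl⟩
    exact Fin.forall_fin_two.2 ⟨hBE hx, hmaps (hBE hx)⟩
  have hpair_inj : ∀ p ∈ pair '' B, Function.Injective p := by
    rintro _ ⟨x, hx, rfl⟩
    exact injective_pair_iff_ne.2 (hlt x (hBE hx)).ne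
  have hdisj : PairwiseDisjointTuples (pair '' B) := by
    rintro _ ⟨x, hx, rfl⟩ _ ⟨y, hy, rfl⟩ hne
    have hxy : x ≠ y := fun h => hne (congrArg pair h)
    simp only [Fin.forall_fin_two]
    exact ⟨⟨hxy, ((hr x hx).1.trans (hr y hy).2).ne⟩,
      ((hr y hy).1.trans (hr x hx).2).ne', hf.injOn.ne (hBE hx) (hBE hy) hxy⟩
  intro hEnt
  obtain ⟨_, ⟨x, hx, rfl⟩, _, ⟨y, hy, rfl⟩, -, hs⟩ :=
    hEnt (pair '' B) hpairE hpair_inj hdisj ((Cardinal.mk_image_eq hpair).trans hB) ![0, 1]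
  have hxy : x < y := (hs 0).2 rfl
  have hfxy : ¬f x < f y := (hs 1).not.2 (by simp)
  exact hfxy (hf (hBE hx) (hBE hy) hxy)

/-- Under CH there is an uncountable `E ⊆ ℝ` which is not
2-entangled, contains `ℚ` and is concentrated on `ℚ`, and yet `(E[≤])²` is
normal. -/
theorem stmt12 (hCH : ContinuumHypothesis) :
    ∃ E : Set ℝ, ¬E.Countable ∧ ¬NEntangled E 2 ∧
      (Set.range ((↑) : ℚ → ℝ) ⊆ E ∧
        ∀ U : Set ℝ, IsOpen U → Set.range ((↑) : ℚ → ℝ) ⊆ U →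
          (E \ U).Countable) ∧
      @NormalSpace (E × E) (sorgenfreySq E) := by
  obtain ⟨F, hF, hLuzin, hthin⟩ := hCH.exists_uncountable_isLuzin_antitoneThin (α := ℝ)
  obtain ⟨z, hz⟩ : F.Nonempty := nonempty_iff_ne_empty.2 fun h => hF (h ▸ countable_empty)
  let shift (q : ℚ) (x : ℝ) : ℝ := x + (q - z)
  let E : Set ℝ := ⋃ q, shift q '' F
  have hshift_mem (q : ℚ) {x : ℝ} (hx : x ∈ F) : x + (q - z) ∈ E := mem_iUnion.2 ⟨q, x, hx, rfl⟩
  have hQE : range ((↑) : ℚ → ℝ) ⊆ E := by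
    rintro _ ⟨q, rfl⟩
    simpa using hshift_mem q hz
  have hE : ¬E.Countable := fun hcount => hF <|
    (hcount.preimage (add_left_injective ((0 : ℚ) - z : ℝ))).mono fun x hx => hshift_mem 0 hx
  have hE_add_one : MapsTo (· + 1) E E := by
    intro y hy
    obtain ⟨q, x, hx, rfl⟩ := mem_iUnion.1 hy
    convert! hshift_mem (q + 1) hx using 1
    push_cast
    ring
  have hE_luzin : IsLuzin E :=
    hLuzin.iUnion_image (fun q => by fun_prop) fun q => isOpenMap_add_right _
  have hE_thin : AntitoneThin E := hthin.iUnion_image fun q => add_left_strictMono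
  exact ⟨E, hE,
    not_nEntangled_two_of_strictMonoOn hE (add_left_strictMono.strictMonoOn E) hE_add_one
      fun x _ => lt_add_one x,
    ⟨hQE, fun U hU hQU => hE_luzin U hU (Rat.isDenseEmbedding_coe_real.dense.mono hQU)⟩,
    hE_thin.normalSpace_sorgenfreySq⟩
end
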